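/- arXiv:1910.02823 — 11 statements merged into one kernel-verified Lean document; each statement's English description precedes it below -/
import Mathlib

section
/- Let X be a Hausdorff space, let Y be a Hausdorff space with a strictly increasing closed cover {B_n}_{n∈ℕ}, and let 𝒜 be a family of subsets of X such that for each A ∈ 𝒜 there is a decreasing sequence {G(n,A) : n ∈ ℕ} of open subsets of X with A = ⋂_{n∈ℕ} G(n,A). For A ∈ 𝒜 and x ∉ A set n_A(x) = min{n ∈ ℕ : x ∉ G(n,A)}, and define φ_A : X → F(Y) by φ_A(x) = Y if x ∈ A and φ_A(x) = B_{n_A(x)} if x ∉ A. Then: (i) for every A ∈ 𝒜 the map φ_A is lower semi-continuous; (ii) for every A ∈ 𝒜, A = ⋂_{n∈ℕ} φ_A^{-1}[Y∖B_n]; and (iii) if moreover A₁ ⊆ A₂ implies G(n,A₁) ⊆ G(n,A₂) for every n ∈ ℕ, then A₁ ⊆ A₂ (A₁, A₂ ∈ 𝒜) implies φ_{A₁}(x) ⊆ φ_{A₂}(x) for every x ∈ X. -/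
/-!
Everything follows from one description of the maps: `y ∈ φ A x` if and only if `x ∈ G k A` for
every `k` with `y ∉ B k` (`mem_phi_iff`). Since the `B k` increase to the whole space, each `y`
imposes only finitely many conditions `x ∈ G k A`, so the set of `x` with `y ∈ φ A x` is open, which
gives lower semi-continuity. A point of `φ A x` outside `B n` forces `x ∈ G n A`, which gives the
description of `A`, and the right-hand side is visibly monotone in `G k A`.
-/

open Set Filter Topology TopologicalSpace

/-- A strictly increasing closed cover of `Y`. -/
def SICC {Y : Type*} [TopologicalSpace Y] (B : ℕ → Set Y) : Prop :=
  (∀ n, IsClosed (B n)) ∧ (⋃ n, B n) = Set.univ ∧ (B 0).Nonempty ∧ ∀ n, B n ⊂ B (n + 1)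

/-- A lower semi-continuous set-valued map with nonempty closed values. -/
def LSCMap {X Y : Type*} [TopologicalSpace X] [TopologicalSpace Y] (φ : X → Set Y) : Prop :=
  (∀ x, (φ x).Nonempty ∧ IsClosed (φ x)) ∧
    ∀ V : Set Y, IsOpen V → IsOpen {x | (φ x ∩ V).Nonempty}

theorem SICC.monotone {Y : Type*} [TopologicalSpace Y] {B : ℕ → Set Y} (hB : SICC B) :
    Monotone B :=
  monotone_nat_of_le_succ fun n => (hB.2.2.2 n).subset

theorem SICC.exists_notMem {Y : Type*} [TopologicalSpace Y] {B : ℕ → Set Y} (hB : SICC B)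
    (n : ℕ) : ∃ y, y ∉ B n := by
  obtain ⟨y, -, hy⟩ := Set.exists_of_ssubset (hB.2.2.2 n)
  exact ⟨y, hy⟩

theorem SICC.finite_notMem {Y : Type*} [TopologicalSpace Y] {B : ℕ → Set Y} (hB : SICC B)
    (y : Y) : {k | y ∉ B k}.Finite := by
  obtain ⟨N, hN⟩ := Set.mem_iUnion.1 (hB.2.1 ▸ Set.mem_univ y : y ∈ ⋃ n, B n)
  refine (Set.finite_lt_nat N).subset fun k hk => ?_
  by_contra h
  exact hk (hB.monotone (not_lt.1 h) hN)

/-- Membership in the value of the map attached to `A = ⋂ n, g n`, free of the case distinction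
and of the minimum in its definition; `F` is the value at `x`. -/
theorem mem_phi_iff {X Y : Type*} [TopologicalSpace Y] {B : ℕ → Set Y} (hB : SICC B)
    {A : Set X} {g : ℕ → Set X} (hA : A = ⋂ n, g n) {x : X} {F : Set Y}
    (hmem : x ∈ A → F = Set.univ) (hout : x ∉ A → F = B (sInf {n | x ∉ g n})) (y : Y) :
    y ∈ F ↔ ∀ k, y ∉ B k → x ∈ g k := by
  by_cases hx : x ∈ A
  · rw [hmem hx]
    rw [hA, Set.mem_iInter] at hx
    simp [hx]
  · rw [hout hx]
    have hne : {n | x ∉ g n}.Nonempty := by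
      rw [hA, Set.mem_iInter] at hx
      exact not_forall.1 hx
    constructor
    · intro hy k hk
      by_contra hxk
      exact hk (hB.monotone (Nat.sInf_le hxk) hy)
    · intro h
      by_contra hy
      exact Nat.sInf_mem hne (h _ hy)

theorem statement0 {X Y : Type*} [TopologicalSpace X] [T2Space X]
    [TopologicalSpace Y] [T2Space Y] (B : ℕ → Set Y) (hB : SICC B)
    (𝒜 : Set (Set X)) (G : ℕ → Set X → Set X)
    (hGopen : ∀ A ∈ 𝒜, ∀ n, IsOpen (G n A))
    (hGdec : ∀ A ∈ 𝒜, ∀ n, G (n + 1) A ⊆ G n A)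
    (hGint : ∀ A ∈ 𝒜, A = ⋂ n, G n A)
    (φ : Set X → X → Set Y)
    (hφmem : ∀ A ∈ 𝒜, ∀ x ∈ A, φ A x = Set.univ)
    (hφout : ∀ A ∈ 𝒜, ∀ x ∉ A, φ A x = B (sInf {n | x ∉ G n A})) :
    (∀ A ∈ 𝒜, LSCMap (φ A)) ∧
    (∀ A ∈ 𝒜, A = ⋂ n, {x | (φ A x ∩ (B n)ᶜ).Nonempty}) ∧
    ((∀ A₁ ∈ 𝒜, ∀ A₂ ∈ 𝒜, A₁ ⊆ A₂ → ∀ n, G n A₁ ⊆ G n A₂) →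
      ∀ A₁ ∈ 𝒜, ∀ A₂ ∈ 𝒜, A₁ ⊆ A₂ → ∀ x, φ A₁ x ⊆ φ A₂ x) := by
  have key : ∀ A ∈ 𝒜, ∀ x y, y ∈ φ A x ↔ ∀ k, y ∉ B k → x ∈ G k A := fun A hA x y =>
    mem_phi_iff hB (g := fun k => G k A) (hGint A hA) (hφmem A hA x) (hφout A hA x) y
  refine ⟨fun A hA => ⟨fun x => ⟨?_, ?_⟩, fun V _ => ?_⟩, fun A hA => ?_, ?_⟩
  · obtain ⟨y, hy⟩ := hB.2.2.1
    exact ⟨y, (key A hA x y).2 fun k hk => absurd (hB.monotone (Nat.zero_le k) hy) hk⟩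
  · by_cases hx : x ∈ A
    · rw [hφmem A hA x hx]
      exact isClosed_univ
    · rw [hφout A hA x hx]
      exact hB.1 _
  · have hV : {x | (φ A x ∩ V).Nonempty} = ⋃ y ∈ V, ⋂ k ∈ {k | y ∉ B k}, G k A := by
      ext x
      simp only [Set.Nonempty, Set.mem_inter_iff, key A hA, Set.mem_ofPred_eq, Set.mem_iUnion,
        Set.mem_iInter, exists_prop, and_comm]
    rw [hV]
    exact isOpen_biUnion fun y _ => (hB.finite_notMem y).isOpen_biInter fun k _ => hGopen A hA k
  · ext x
    rw [Set.mem_iInter]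
    constructor
    · intro hx n
      obtain ⟨y, hy⟩ := hB.exists_notMem n
      exact ⟨y, by rw [hφmem A hA x hx]; exact Set.mem_univ y, hy⟩
    · intro h
      rw [hGint A hA, Set.mem_iInter]
      intro n
      obtain ⟨y, hy, hyn⟩ := h n
      exact (key A hA x y).1 hy n hyn
  · intro hG A₁ h₁ A₂ h₂ h x y hy
    exact (key A₂ h₂ x y).2 fun k hk => hG A₁ h₁ A₂ h₂ h k ((key A₁ h₁ x y).1 hy k hk)
end

section
/- Let Y be a Hausdorff space with a strictly increasing closed cover {B_n}_{n∈ℕ}. A Hausdorff space X is first countable if and only if to each point x ∈ X one can assign a lower semi-continuous set-valued map φ_x : X → F(Y) such that: (G) for every x ∈ X, {x} = ⋂_{n∈ℕ} φ_x^{-1}[Y∖B_n]; and (b) for every x ∈ X and every closed set F ⊆ X with x ∉ F, there exists n ∈ ℕ with F ⊆ φ_x^#[B_n]. -/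
/-!
If the maps `φ x` are given, the sets `{y | φ x y ⊈ B n}` are open by lower semi-continuity, contain
`x` by (G), and by (b) each open neighbourhood of `x` contains one of them; so they form a
countable neighbourhood base at `x`.

Conversely, choose `b 0 ∈ B 0` and `b (n + 1) ∈ B (n + 1) \ B n`, and a decreasing base `U n` of open
neighbourhoods of `x`. The value `φ x y` is the closure of `{b 0} ∪ {b (n + 1) | y ∈ U n}`. It meets
an open `V` iff `b 0 ∈ V` or `y ∈ U n` for some `n` with `b (n + 1) ∈ V`, an open condition on `y`.
It leaves every `B n` when `y = x`, and lies in `B m` as soon as `y ∉ U m`, since the cover is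
increasing and the base decreasing; this gives (G) and (b).
-/

open Set Filter Topology TopologicalSpace

/-- The closure of `{b 0} ∪ {b (n + 1) | y ∈ U n}`: the points `b n` picked up as `y` enters the
sets `U n`. -/
def pickMap {X Y : Type*} [TopologicalSpace Y] (b : ℕ → Y) (U : ℕ → Set X) (y : X) : Set Y :=
  closure (insert (b 0) {z | ∃ n, y ∈ U n ∧ z = b (n + 1)})

lemma lscMap_pickMap {X Y : Type*} [TopologicalSpace X] [TopologicalSpace Y] (b : ℕ → Y)
    {U : ℕ → Set X} (hU : ∀ n, IsOpen (U n)) : LSCMap (pickMap b U) := by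
  refine ⟨fun y => ⟨⟨b 0, subset_closure (mem_insert _ _)⟩, isClosed_closure⟩, fun V hV => ?_⟩
  have key : {y | (pickMap b U y ∩ V).Nonempty} =
      {_y | b 0 ∈ V} ∪ ⋃ n, {y | y ∈ U n ∧ b (n + 1) ∈ V} := by
    ext y
    simp only [pickMap, mem_ofPred_eq, closure_inter_open_nonempty_iff hV, mem_union, mem_iUnion]
    constructor
    · rintro ⟨z, rfl | ⟨n, hn, rfl⟩, hz⟩
      · exact Or.inl hz
      · exact Or.inr ⟨n, hn, hz⟩
    · rintro (h | ⟨n, hn, h⟩)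
      · exact ⟨_, mem_insert _ _, h⟩
      · exact ⟨_, mem_insert_of_mem _ ⟨n, hn, rfl⟩, h⟩
  rw [key]
  exact isOpen_const.union (isOpen_iUnion fun n => (hU n).and isOpen_const)

lemma pickMap_subset {X Y : Type*} [TopologicalSpace Y] {B : ℕ → Set Y}
    (hc : ∀ n, IsClosed (B n)) (hm : Monotone B) {b : ℕ → Y} (hb : ∀ n, b n ∈ B n)
    {U : ℕ → Set X} (hU : Antitone U) {y : X} {m : ℕ} (hy : y ∉ U m) :
    pickMap b U y ⊆ B m := by
  refine closure_minimal ?_ (hc m)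
  rintro z (rfl | ⟨n, hn, rfl⟩)
  · exact hm (Nat.zero_le m) (hb 0)
  · have hnm : n < m := not_le.1 fun h => hy (hU h hn)
    exact hm hnm (hb (n + 1))

theorem statement2 {X Y : Type*} [TopologicalSpace X] [T2Space X]
    [TopologicalSpace Y] [T2Space Y] (B : ℕ → Set Y) (hB : SICC B) :
    FirstCountableTopology X ↔
      ∃ φ : X → X → Set Y,
        (∀ x : X, LSCMap (φ x)) ∧
        (∀ x : X, ({x} : Set X) = ⋂ n, {y | (φ x y ∩ (B n)ᶜ).Nonempty}) ∧
        (∀ (x : X) (F : Set X), IsClosed F → x ∉ F →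
          ∃ n : ℕ, F ⊆ {y | φ x y ⊆ B n}) := by
  obtain ⟨hc, -, ⟨b₀, hb₀⟩, hs⟩ := hB
  constructor
  · intro _
    have hm : Monotone B := monotone_nat_of_le_succ fun n => (hs n).subset
    choose c hc₁ hc₂ using fun n => exists_of_ssubset (hs n)
    let b : ℕ → Y := fun n => Nat.casesOn n b₀ c
    have hb : ∀ n, b n ∈ B n := by
      rintro (_ | n)
      exacts [hb₀, hc₁ n]
    have hU : ∀ x : X, ∃ U : ℕ → Set X, (∀ n, x ∈ U n ∧ IsOpen (U n)) ∧
        (𝓝 x).HasAntitoneBasis U := fun x => (nhds_basis_opens x).exists_antitone_subbasis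
    choose U hUo hUb using hU
    have hF : ∀ (x : X) (F : Set X), IsClosed F → x ∉ F →
        ∃ n : ℕ, F ⊆ {y | pickMap b (U x) y ⊆ B n} := by
      intro x F hFc hx
      obtain ⟨n, -, hn⟩ := (hUb x).1.mem_iff.1 (hFc.isOpen_compl.mem_nhds hx)
      exact ⟨n, fun y hy => pickMap_subset hc hm hb (hUb x).2 fun h => hn h hy⟩
    refine ⟨fun x => pickMap b (U x), fun x => lscMap_pickMap b fun n => (hUo x n).2,
      fun x => Subset.antisymm ?_ ?_, hF⟩
    · rintro _ rfl
      exact mem_iInter.2 fun n => ⟨b (n + 1),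
        subset_closure (mem_insert_of_mem _ ⟨n, (hUo _ n).1, rfl⟩), hc₂ n⟩
    · intro y hy
      by_contra hne
      -- (b) for the closed set `{y}` bounds `φ x y` by some `B n`.
      obtain ⟨n, hn⟩ := hF x {y} isClosed_singleton fun h => hne h.symm
      obtain ⟨z, hz, hzn⟩ := mem_iInter.1 hy n
      exact hzn (hn rfl hz)
  · rintro ⟨φ, hL, hG, hF⟩
    refine ⟨fun x => ?_⟩
    have hbasis : (𝓝 x).HasBasis (fun _ : ℕ => True)
        fun n => {y | (φ x y ∩ (B n)ᶜ).Nonempty} := by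
      refine ⟨fun t => ⟨fun ht => ?_, ?_⟩⟩
      · obtain ⟨V, hVt, hV, hxV⟩ := mem_nhds_iff.1 ht
        obtain ⟨n, hn⟩ := hF x Vᶜ hV.isClosed_compl fun h => h hxV
        refine ⟨n, trivial, fun y ⟨z, hz, hzn⟩ => hVt ?_⟩
        by_contra hy
        exact hzn (hn hy hz)
      · rintro ⟨n, -, hn⟩
        refine mem_of_superset (((hL x).2 _ (hc n).isOpen_compl).mem_nhds ?_) hn
        exact mem_iInter.1 ((hG x).subset rfl) n
    exact hbasis.isCountablyGenerated
end

section
/- Let Y be a Hausdorff space with a strictly increasing closed cover {B_n}_{n∈ℕ}. A Hausdorff space X is a regular γ-space if and only if to each compact set K ⊆ X one can assign a lower semi-continuous set-valued map φ_K : X → F(Y) such that: (G) for every compact K, K = ⋂_{n∈ℕ} φ_K^{-1}[Y∖B_n]; (m) if K₁ ⊆ K₂ are compact, then φ_{K₁}(x) ⊆ φ_{K₂}(x) for every x ∈ X; and (b') for every compact K and every closed F ⊆ X with K ∩ F = ∅, there exist an open set V ⊇ F and n ∈ ℕ with V ⊆ φ_K^#[B_n]. -/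
/-!
Both directions pass through families of open neighbourhoods `U n K` of compact sets `K`,
decreasing in `n` and increasing in `K`, such that every closed set disjoint from `K` has an open
neighbourhood missing some `U n K`.

From a g-function one takes `U n K = ⋃ x ∈ K, g n x`. The γ-condition together with compactness
forces `U n K ⊆ O` for some `n` whenever `O ⊇ K` is open, and regularity separates `K` from
disjoint closed sets. The family is encoded by `φ K x = ⋂ {B n | x ∉ U n K}`, which is lower
semi-continuous because `{x | y ∈ φ K x}` is a finite intersection of sets `U n K` for every `y`.

Conversely `U n K = {x | φ K x ⊄ B n}` is such a family. Applied to `K = {x}` it gives regularity,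
and `g n x = U n {x}` is a g-function with `(g n x)ₙ` a neighbourhood base at `x`. If `y n ∈ g n x`
and `u n ∈ g n (y n)`, then `y n → x`, so a tail of `y` together with `x` is a compact set `K`
inside any prescribed open `O ∋ x`. Since `u n ∈ U n {y n} ⊆ U n K ⊆ O` for large `n`, `u n → x`.
-/

open Set Filter Topology TopologicalSpace

/-- A g-function for `X`. -/
def IsGFunction {X : Type*} [TopologicalSpace X] (g : ℕ → X → Set X) : Prop :=
  (∀ n x, IsOpen (g n x)) ∧ (∀ n x, x ∈ g n x) ∧ ∀ n x, g (n + 1) x ⊆ g n x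

/-- `X` is a γ-space. -/
def GammaSpace (X : Type*) [TopologicalSpace X] : Prop :=
  ∃ g : ℕ → X → Set X, IsGFunction g ∧
    ∀ (x : X) (y u : ℕ → X), (∀ n, y n ∈ g n x) → (∀ n, u n ∈ g n (y n)) →
      MapClusterPt x atTop u

/-- In a γ-space the neighbourhoods `⋃ x ∈ K, g n x` of a compact set `K` shrink into any open
set containing `K`. -/
lemma gamma_compact {X : Type*} [TopologicalSpace X] {g : ℕ → X → Set X} (hg : IsGFunction g)
    (hγ : ∀ (x : X) (y u : ℕ → X), (∀ n, y n ∈ g n x) → (∀ n, u n ∈ g n (y n)) →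
      MapClusterPt x atTop u)
    {K O : Set X} (hK : IsCompact K) (hO : IsOpen O) (hKO : K ⊆ O) :
    ∃ n, ∀ x ∈ K, g n x ⊆ O := by
  obtain ⟨hgo, hgm, hgs⟩ := hg
  have anti : ∀ x, Antitone fun n => g n x := fun x => antitone_nat_of_succ_le fun n => hgs n x
  have key : ∀ x ∈ K, ∃ n, ∀ y ∈ g n x, g n y ⊆ O := by
    intro x hx
    by_contra! h
    choose y hy h2 using h
    have h3 : ∀ n, ∃ u, u ∈ g n (y n) ∧ u ∉ O := fun n => Set.not_subset.1 (h2 n)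
    choose u hu huO using h3
    have hc := hγ x y u hy hu
    obtain ⟨n, hn⟩ := (hc.frequently (hO.mem_nhds (hKO hx))).exists
    exact huO n hn
  choose! N hN using key
  obtain ⟨t, htK, ht⟩ := hK.elim_nhds_subcover (fun x => g (N x) x)
    (fun x _ => (hgo _ _).mem_nhds (hgm _ _))
  refine ⟨t.sup N, fun z hz => ?_⟩
  obtain ⟨x, hxt, hzx⟩ := Set.mem_iUnion₂.1 (ht hz)
  exact (anti z (Finset.le_sup hxt)).trans (hN x (htK x hxt) z hzx)

theorem statement3 {X Y : Type*} [TopologicalSpace X] [T2Space X]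
    [TopologicalSpace Y] [T2Space Y] (B : ℕ → Set Y) (hB : SICC B) :
    (RegularSpace X ∧ GammaSpace X) ↔
      ∃ φ : Set X → X → Set Y,
        (∀ K : Set X, IsCompact K → LSCMap (φ K)) ∧
        (∀ K : Set X, IsCompact K → K = ⋂ n, {x | (φ K x ∩ (B n)ᶜ).Nonempty}) ∧
        (∀ K₁ K₂ : Set X, IsCompact K₁ → IsCompact K₂ → K₁ ⊆ K₂ →
          ∀ x, φ K₁ x ⊆ φ K₂ x) ∧
        (∀ (K F : Set X), IsCompact K → IsClosed F → K ∩ F = ∅ →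
          ∃ (V : Set X) (n : ℕ), IsOpen V ∧ F ⊆ V ∧ V ⊆ {x | φ K x ⊆ B n}) := by
  obtain ⟨hBc, hBu, ⟨b, hb⟩, hBs⟩ := hB
  have hBmono : Monotone B := monotone_nat_of_le_succ fun n => (hBs n).subset
  constructor
  · rintro ⟨hreg, g, hg, hγ⟩
    have hsh := @gamma_compact X _ g hg hγ
    obtain ⟨hgo, hgm, hgs⟩ := hg
    have sep : ∀ K F : Set X, IsCompact K → IsClosed F → K ∩ F = ∅ →
        ∃ (V : Set X) (n : ℕ), IsOpen V ∧ F ⊆ V ∧ ∀ z ∈ V, ∀ x ∈ K, z ∉ g n x := by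
      intro K F hK hF hKF
      obtain ⟨O, V, hO, hV, hKO, hFV, hd⟩ :=
        SeparatedNhds.of_isCompact_isClosed hK hF (Set.disjoint_iff_inter_eq_empty.2 hKF)
      obtain ⟨n, hn⟩ := hsh hK hO hKO
      exact ⟨V, n, hV, hFV, fun z hz x hx hzx => Set.disjoint_left.1 hd (hn x hx hzx) hz⟩
    refine ⟨fun K x => {y | ∀ n, (∀ k ∈ K, x ∉ g n k) → y ∈ B n}, ?_, ?_, ?_, ?_⟩
    · intro K hK
      refine ⟨fun x => ⟨⟨b, fun n _ => hBmono (Nat.zero_le n) hb⟩, ?_⟩, fun V hV => ?_⟩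
      · simp only [Set.ofPred_forall]
        exact isClosed_iInter fun n => isClosed_iInter fun _ => hBc n
      · have point : ∀ y : Y, IsOpen {x | ∀ n, (∀ k ∈ K, x ∉ g n k) → y ∈ B n} := by
          intro y
          obtain ⟨m, hm⟩ := Set.mem_iUnion.1 (hBu.symm ▸ Set.mem_univ y : y ∈ ⋃ n, B n)
          -- Only the indices `n < m` constrain `x`, since `y ∈ B m`.
          have : {x | ∀ n, (∀ k ∈ K, x ∉ g n k) → y ∈ B n} =
              ⋂ n ∈ {n | n < m ∧ y ∉ B n}, ⋃ k ∈ K, g n k := by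
            ext x
            simp only [Set.mem_iInter, Set.mem_iUnion, Set.mem_ofPred_eq, exists_prop]
            constructor
            · rintro h n ⟨_, hn⟩
              by_contra! hc
              exact hn (h n hc)
            · intro h n hn
              by_contra hc
              obtain ⟨k, hk, hx⟩ := h n
                ⟨lt_of_not_ge fun hmn => hc (hBmono hmn hm), hc⟩
              exact hn k hk hx
          rw [this]
          exact ((Set.finite_lt_nat m).subset fun n hn => hn.1).isOpen_biInter fun n _ =>
            isOpen_biUnion fun k _ => hgo n k
        have : {x | ({y | ∀ n, (∀ k ∈ K, x ∉ g n k) → y ∈ B n} ∩ V).Nonempty} =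
            ⋃ y ∈ V, {x | ∀ n, (∀ k ∈ K, x ∉ g n k) → y ∈ B n} := by
          ext x
          simp only [Set.mem_iUnion, Set.mem_ofPred_eq, exists_prop]
          exact ⟨fun ⟨y, h1, h2⟩ => ⟨y, h2, h1⟩, fun ⟨y, h2, h1⟩ => ⟨y, h1, h2⟩⟩
        rw [this]
        exact isOpen_biUnion fun y _ => point y
    · intro K hK
      ext x
      simp only [Set.mem_iInter, Set.mem_ofPred_eq]
      constructor
      · intro hx n
        obtain ⟨y, _, hy⟩ := Set.exists_of_ssubset (hBs n)
        exact ⟨y, fun m hm => absurd (hgm m x) (hm x hx), hy⟩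
      · intro h
        by_contra hx
        obtain ⟨V, n, -, hFV, hV⟩ := sep K {x} hK isClosed_singleton (by simpa using hx)
        obtain ⟨y, hy, hyn⟩ := h n
        exact hyn (hy n (hV x (hFV rfl)))
    · intro K₁ K₂ _ _ h12 x y hy n hn
      exact hy n fun k hk => hn k (h12 hk)
    · intro K F hK hF hKF
      obtain ⟨V, n, hVo, hFV, hV⟩ := sep K F hK hF hKF
      exact ⟨V, n, hVo, hFV, fun x hx y hy => hy n (hV x hx)⟩
  · rintro ⟨φ, hlsc, hG, hm, hb'⟩
    let U : ℕ → Set X → Set X := fun n K => {x | (φ K x ∩ (B n)ᶜ).Nonempty}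
    have Uo : ∀ n K, IsCompact K → IsOpen (U n K) := fun n K hK =>
      (hlsc K hK).2 _ (hBc n).isOpen_compl
    have Usub : ∀ n K, IsCompact K → K ⊆ U n K := fun n K hK x hx => by
      rw [hG K hK] at hx
      exact Set.mem_iInter.1 hx n
    have Uanti : ∀ K, Antitone fun n => U n K := fun K m n hmn x ⟨y, h1, h2⟩ =>
      ⟨y, h1, fun h => h2 (hBmono hmn h)⟩
    have Umono : ∀ n K₁ K₂, IsCompact K₁ → IsCompact K₂ → K₁ ⊆ K₂ → U n K₁ ⊆ U n K₂ :=
      fun n K₁ K₂ h1 h2 h12 x ⟨y, hy, hyn⟩ => ⟨y, hm K₁ K₂ h1 h2 h12 x hy, hyn⟩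
    have Usep : ∀ K F, IsCompact K → IsClosed F → K ∩ F = ∅ →
        ∃ (V : Set X) (n : ℕ), IsOpen V ∧ F ⊆ V ∧ Disjoint V (U n K) := by
      intro K F hK hF hKF
      obtain ⟨V, n, hVo, hFV, hV⟩ := hb' K F hK hF hKF
      exact ⟨V, n, hVo, hFV, Set.disjoint_left.2 fun x hx ⟨y, h1, h2⟩ => h2 (hV hx h1)⟩
    have Ubase : ∀ K O, IsCompact K → IsOpen O → K ⊆ O → ∃ n, U n K ⊆ O := by
      intro K O hK hO hKO
      obtain ⟨V, n, -, hFV, hd⟩ := Usep K Oᶜ hK hO.isClosed_compl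
        (Set.disjoint_iff_inter_eq_empty.1 (Set.disjoint_compl_right_iff_subset.2 hKO))
      refine ⟨n, fun x hx => ?_⟩
      by_contra hxO
      exact Set.disjoint_left.1 hd (hFV hxO) hx
    refine ⟨⟨fun {F a} hF ha => ?_⟩, fun n x => U n {x}, ⟨?_, ?_, ?_⟩, ?_⟩
    · obtain ⟨V, n, hVo, hFV, hd⟩ := Usep {a} F isCompact_singleton hF (by simpa using ha)
      rw [← nhdsSet_singleton, ← separatedNhds_iff_disjoint]
      exact ⟨V, U n {a}, hVo, Uo n _ isCompact_singleton, hFV, Usub n _ isCompact_singleton, hd⟩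
    · exact fun n x => Uo n _ isCompact_singleton
    · exact fun n x => Usub n _ isCompact_singleton rfl
    · exact fun n x => Uanti {x} n.le_succ
    · intro x y u hy hu
      have hyx : Tendsto y atTop (𝓝 x) := by
        refine tendsto_nhds.2 fun O hO hx => ?_
        obtain ⟨n, hn⟩ := Ubase {x} O isCompact_singleton hO (by simpa using hx)
        filter_upwards [eventually_ge_atTop n] with k hk
        exact hn (Uanti {x} hk (hy k))
      have hux : Tendsto u atTop (𝓝 x) := by
        refine tendsto_nhds.2 fun O hO hx => ?_
        obtain ⟨M, hM⟩ := eventually_atTop.1 (hyx.eventually (hO.mem_nhds hx))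
        have hKc : IsCompact (insert x (Set.range fun n => y (n + M))) :=
          ((tendsto_add_atTop_iff_nat M).2 hyx).isCompact_insert_range
        obtain ⟨n, hn⟩ := Ubase _ O hKc hO (by
          rintro z (rfl | ⟨k, rfl⟩)
          · exact hx
          · exact hM _ (Nat.le_add_left M k))
        filter_upwards [eventually_ge_atTop n, eventually_ge_atTop M] with k hk hkM
        refine hn (Uanti _ hk (Umono k {y k} _ isCompact_singleton hKc ?_ (hu k)))
        rintro z rfl
        exact Or.inr ⟨k - M, by simp [Nat.sub_add_cancel hkM]⟩
      exact hux.mapClusterPt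
end

section
/- Let Y be a Hausdorff space with a strictly increasing closed cover {B_n}_{n∈ℕ}. A Hausdorff space X is a γ-space if and only if to each compact set K ⊆ X one can assign a lower semi-continuous set-valued map φ_K : X → F(Y) such that: (G) for every compact K, K = ⋂_{n∈ℕ} φ_K^{-1}[Y∖B_n]; (m) if K₁ ⊆ K₂ are compact, then φ_{K₁}(x) ⊆ φ_{K₂}(x) for every x ∈ X; and (b) for every compact K and every closed F ⊆ X with K ∩ F = ∅, there exists n ∈ ℕ with F ⊆ φ_K^#[B_n]. -/
/-!
Both sides say that every compact `K` has a decreasing sequence of open neighbourhoods `U n K`,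
forming a neighbourhood base of `K` and increasing with `K`.

From a γ-structure `g`, put `U n K = ⋃ x ∈ K, g n x`. This is a base at `K`: otherwise there are
`y n ∈ K` and `u n ∈ g n (y n)` outside some open `O ⊇ K`, and along a subsequence on which
`y n` lies in the sets `g k z` for a cluster point `z ∈ K`, the γ-condition puts some `u n` in `O`
(`GammaSpace.exists_biUnion_subset`). The multifunction attached to such a `U` is
`φ K x = ⋂ {B n | x ∉ U n K}`, for which `U n K` is exactly the set where `φ K` meets the
complement of `B n` (`levelMap_inter_compl_nonempty`).

Conversely, from `φ`, let `U n K` be the set where `φ K` meets the complement of `B n`, and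
`g n x = U n {x}`. If `y n ∈ g n x` then `y n → x`, so the sets `{x} ∪ {y n | n ≥ m}` are compact,
and eventually contained in any given neighbourhood of `x`. Applying the base property to one of
them shows that any `u n ∈ g n (y n)` even converges to `x`.
-/

open Set Filter Topology TopologicalSpace

/-- The set-valued map sending `x` to the intersection of those `B n` for which `x ∉ U n`; for
decreasing `U` this is the first such `B n`, or the whole space if there is none. -/
def levelMap {X Y : Type*} (B : ℕ → Set Y) (U : ℕ → Set X) (x : X) : Set Y :=
  {y | ∀ n, x ∉ U n → y ∈ B n}

theorem levelMap_lscMap {X Y : Type*} [TopologicalSpace X] [TopologicalSpace Y] {B : ℕ → Set Y}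
    (hB : SICC B) {U : ℕ → Set X} (hU : ∀ n, IsOpen (U n)) : LSCMap (levelMap B U) := by
  refine ⟨fun x => ⟨?_, ?_⟩, fun V _ => ?_⟩
  · obtain ⟨y, hy⟩ := hB.2.2.1
    exact ⟨y, fun n _ => hB.monotone (Nat.zero_le n) hy⟩
  · have : levelMap B U x = ⋂ n, ⋂ (_ : x ∉ U n), B n := by
      ext y
      simp [levelMap]
    rw [this]
    exact isClosed_iInter fun n => isClosed_iInter fun _ => hB.1 n
  · rw [isOpen_iff_mem_nhds]
    rintro x ⟨y, hyφ, hyV⟩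
    obtain ⟨n, hn⟩ : ∃ n, y ∈ B n := by
      have : y ∈ ⋃ n, B n := hB.2.1 ▸ mem_univ y
      simpa using this
    -- Membership `y ∈ levelMap B U x'` only constrains the indices `m < n` with `y ∉ B m`.
    have hev : ∀ᶠ x' in 𝓝 x, ∀ m ∈ Finset.range n, y ∉ B m → x' ∈ U m := by
      rw [Filter.eventually_all_finset]
      intro m _
      by_cases hym : y ∈ B m
      · simp [hym]
      · have hx : x ∈ U m := by
          by_contra h
          exact hym (hyφ m h)
        filter_upwards [(hU m).mem_nhds hx] with x' hx' _ using hx'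
    filter_upwards [hev] with x' hx'
    refine ⟨y, fun m hm => ?_, hyV⟩
    by_contra hym
    by_cases hmn : m < n
    · exact hm (hx' m (Finset.mem_range.2 hmn) hym)
    · exact hym (hB.monotone (not_lt.1 hmn) hn)

theorem levelMap_inter_compl_nonempty {X Y : Type*} [TopologicalSpace Y] {B : ℕ → Set Y}
    (hB : SICC B) {U : ℕ → Set X} (hU : Antitone U) (n : ℕ) (x : X) :
    (levelMap B U x ∩ (B n)ᶜ).Nonempty ↔ x ∈ U n := by
  constructor
  · rintro ⟨y, hy, hyn⟩
    by_contra h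
    exact hyn (hy n h)
  · intro hx
    obtain ⟨y, hy, hyn⟩ := exists_of_ssubset (hB.2.2.2 n)
    refine ⟨y, fun m hm => hB.monotone ?_ hy, hyn⟩
    by_contra h
    exact hm (hU (by omega) hx)

/-- The open sets `⋃ x ∈ K, g n x` form a neighbourhood base of a compact set `K`, when `g`
witnesses that the space is a γ-space. -/
theorem GammaSpace.exists_biUnion_subset {X : Type*} [TopologicalSpace X] {g : ℕ → X → Set X}
    (hg : IsGFunction g)
    (hγ : ∀ (x : X) (y u : ℕ → X), (∀ n, y n ∈ g n x) → (∀ n, u n ∈ g n (y n)) →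
      MapClusterPt x atTop u)
    {K O : Set X} (hK : IsCompact K) (hO : IsOpen O) (hKO : K ⊆ O) :
    ∃ n, ⋃ x ∈ K, g n x ⊆ O := by
  have hanti : ∀ x, Antitone fun n => g n x := fun x => antitone_nat_of_succ_le fun n => hg.2.2 n x
  by_contra! hcon
  have h : ∀ n, ∃ y ∈ K, ∃ u ∈ g n y, u ∉ O := by
    intro n
    obtain ⟨u, hu, huO⟩ := not_subset.1 (hcon n)
    simp only [mem_iUnion, exists_prop] at hu
    obtain ⟨y, hy, huy⟩ := hu
    exact ⟨y, hy, u, huy, huO⟩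
  choose y hyK u hu huO using h
  obtain ⟨z, hzK, hz⟩ := hK.exists_mapClusterPt (u := y) (f := atTop)
    (Filter.le_principal_iff.2 (Filter.mem_map.2 (Filter.Eventually.of_forall hyK)))
  have hsub : ∀ k, ∃ n ≥ k, y n ∈ g k z := fun k =>
    frequently_atTop.1 (hz.frequently ((hg.1 k z).mem_nhds (hg.2.1 k z))) k
  choose s hs hys using hsub
  have hcl := hγ z (fun k => y (s k)) (fun k => u (s k)) hys
    fun k => hanti _ (hs k) (hu (s k))
  obtain ⟨k, hk⟩ := (hcl.frequently (hO.mem_nhds (hKO hzK))).exists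
  exact huO _ hk

/-- Monotonically chosen decreasing countable bases at compact sets yield a γ-space. -/
theorem gammaSpace_of_base {X : Type*} [TopologicalSpace X] (U : ℕ → Set X → Set X)
    (hopen : ∀ n K, IsCompact K → IsOpen (U n K))
    (hsub : ∀ n K, IsCompact K → K ⊆ U n K)
    (hanti : ∀ K, Antitone fun n => U n K)
    (hmono : ∀ n K L, IsCompact K → IsCompact L → K ⊆ L → U n K ⊆ U n L)
    (hbase : ∀ K O, IsCompact K → IsOpen O → K ⊆ O → ∃ n, U n K ⊆ O) : GammaSpace X := by
  refine ⟨fun n x => U n {x}, ⟨fun n x => hopen n _ isCompact_singleton,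
    fun n x => hsub n _ isCompact_singleton rfl, fun n x => hanti _ n.le_succ⟩, ?_⟩
  intro x y u hy hu
  have hyx : Tendsto y atTop (𝓝 x) := by
    rw [tendsto_nhds]
    intro O hO hxO
    obtain ⟨n, hn⟩ := hbase {x} O isCompact_singleton hO (singleton_subset_iff.2 hxO)
    filter_upwards [eventually_ge_atTop n] with m hm using hn (hanti _ hm (hy m))
  suffices h : Tendsto u atTop (𝓝 x) from h.mapClusterPt
  rw [tendsto_nhds]
  intro O hO hxO
  obtain ⟨m, hm⟩ := eventually_atTop.1 (hyx.eventually (hO.mem_nhds hxO))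
  have hK : IsCompact (insert x (range fun n => y (n + m))) :=
    (hyx.comp (tendsto_add_atTop_nat m)).isCompact_insert_range
  obtain ⟨k, hk⟩ := hbase _ O hK hO (by
    rintro _ (rfl | ⟨n, rfl⟩)
    · exact hxO
    · exact hm _ (Nat.le_add_left m n))
  filter_upwards [eventually_ge_atTop k, eventually_ge_atTop m] with n hkn hmn
  refine hk (hanti _ hkn (hmono n _ _ isCompact_singleton hK ?_ (hu n)))
  rw [singleton_subset_iff]
  exact Or.inr ⟨n - m, congrArg y (Nat.sub_add_cancel hmn)⟩

theorem statement4 {X Y : Type*} [TopologicalSpace X] [T2Space X]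
    [TopologicalSpace Y] [T2Space Y] (B : ℕ → Set Y) (hB : SICC B) :
    GammaSpace X ↔
      ∃ φ : Set X → X → Set Y,
        (∀ K : Set X, IsCompact K → LSCMap (φ K)) ∧
        (∀ K : Set X, IsCompact K → K = ⋂ n, {x | (φ K x ∩ (B n)ᶜ).Nonempty}) ∧
        (∀ K₁ K₂ : Set X, IsCompact K₁ → IsCompact K₂ → K₁ ⊆ K₂ →
          ∀ x, φ K₁ x ⊆ φ K₂ x) ∧
        (∀ (K F : Set X), IsCompact K → IsClosed F → K ∩ F = ∅ →
          ∃ n : ℕ, F ⊆ {x | φ K x ⊆ B n}) := by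
  constructor
  · rintro ⟨g, hg, hγ⟩
    have hanti : ∀ K : Set X, Antitone fun n => ⋃ x ∈ K, g n x := fun K =>
      antitone_nat_of_succ_le fun n => iUnion₂_mono fun x _ => hg.2.2 n x
    refine ⟨fun K => levelMap B fun n => ⋃ x ∈ K, g n x, fun K _ => ?_, fun K hK => ?_,
      fun K₁ K₂ _ _ h x y hy n hn => ?_, fun K F hK hF hKF => ?_⟩
    · exact levelMap_lscMap hB fun n => isOpen_biUnion fun x _ => hg.1 n x
    · simp only [levelMap_inter_compl_nonempty hB (hanti K), ofPred_mem_eq]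
      refine Subset.antisymm
        (subset_iInter fun n x hx => mem_biUnion hx (hg.2.1 n x)) fun x hx => ?_
      by_contra hxK
      obtain ⟨n, hn⟩ := GammaSpace.exists_biUnion_subset hg hγ hK isOpen_compl_singleton
        (subset_compl_singleton_iff.2 hxK)
      exact hn (mem_iInter.1 hx n) rfl
    · exact hy n fun hx => hn (biUnion_subset_biUnion_left h hx)
    · obtain ⟨n, hn⟩ := GammaSpace.exists_biUnion_subset hg hγ hK hF.isOpen_compl
        (subset_compl_iff_disjoint_right.2 (disjoint_iff_inter_eq_empty.2 hKF))
      exact ⟨n, fun x hx y hy => hy n fun hxU => hn hxU hx⟩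
  · rintro ⟨φ, hlsc, hG, hm, hb⟩
    refine gammaSpace_of_base (fun n K => {x | (φ K x ∩ (B n)ᶜ).Nonempty})
      (fun n K hK => (hlsc K hK).2 _ (hB.1 n).isOpen_compl)
      (fun n K hK => (hG K hK).subset.trans (iInter_subset _ n))
      (fun K m n hmn x hx => ?_) (fun n K L hK hL hKL x hx => ?_) fun K O hK hO hKO => ?_
    · exact hx.mono (inter_subset_inter_right _ (compl_subset_compl.2 (hB.monotone hmn)))
    · exact hx.mono (inter_subset_inter_left _ (hm K L hK hL hKL x))
    · obtain ⟨n, hn⟩ := hb K Oᶜ hK hO.isClosed_compl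
        (disjoint_iff_inter_eq_empty.1 (disjoint_compl_right_iff_subset.2 hKO))
      refine ⟨n, fun x hx => ?_⟩
      by_contra hxO
      obtain ⟨y, hy, hyn⟩ := hx
      exact hyn (hn hxO hy)
end

section
/- Let Y be a Hausdorff space with a strictly increasing closed cover {B_n}_{n∈ℕ}. A Hausdorff space X is semi-stratifiable if and only if to each closed set F ⊆ X one can assign a lower semi-continuous set-valued map φ_F : X → F(Y) such that: (G) for every closed F, F = ⋂_{n∈ℕ} φ_F^{-1}[Y∖B_n]; and (m) if F₁ ⊆ F₂ are closed, then φ_{F₁}(x) ⊆ φ_{F₂}(x) for every x ∈ X. -/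
/-!
The sets `φ F ⁻¹[Y \ B n]` and the sets `ρ n F` determine each other. From `φ` one simply puts
`ρ n F = φ F ⁻¹[Y \ B n]`, which is open by lower semi-continuity.

Conversely, choose `y ∈ B 0` and `z n ∈ B (n + 1) \ B n`, and let `φ F x` be the closure of
`{y} ∪ {z n | x ∈ ρ 0 F ∩ ⋯ ∩ ρ n F}`. An open set meets a closure iff it meets the set itself, so
preimages of open sets are unions of finite intersections of sets `ρ i F` (or everything).
If `x ∉ ρ n F`, only `y` and some `z k` with `k < n` occur, and these lie in the closed set `B n`.
-/


open Set Filter Topology TopologicalSpace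

/-- `X` is semi-stratifiable. -/
def SemiStratifiable (X : Type*) [TopologicalSpace X] : Prop :=
  ∃ ρ : ℕ → Set X → Set X,
    (∀ (n : ℕ) (F : Set X), IsClosed F → IsOpen (ρ n F)) ∧
    (∀ F : Set X, IsClosed F → F = ⋂ n, ρ n F) ∧
    ∀ (n : ℕ) (F H : Set X), IsClosed F → IsClosed H → F ⊆ H → ρ n F ⊆ ρ n H

/-- The selected points over `x`: the base point `y`, and `z n` for every `n` such that `x` lies in
the first `n + 1` sets of the sequence `r`. -/
def selPts {X Y : Type*} (y : Y) (z : ℕ → Y) (r : ℕ → Set X) (x : X) : Set Y :=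
  {w | w = y ∨ ∃ n, w = z n ∧ ∀ i ≤ n, x ∈ r i}

theorem lscMap_closure_selPts {X Y : Type*} [TopologicalSpace X] [TopologicalSpace Y]
    (y : Y) (z : ℕ → Y) (r : ℕ → Set X) (hr : ∀ n, IsOpen (r n)) :
    LSCMap (fun x => closure (selPts y z r x)) := by
  refine ⟨fun x => ⟨⟨y, subset_closure (Or.inl rfl)⟩, isClosed_closure⟩, fun V hV => ?_⟩
  simp only [closure_inter_open_nonempty_iff hV]
  by_cases hy : y ∈ V
  -- Over `V ∋ y` the preimage is all of `X`.
  · convert isOpen_univ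
    exact eq_univ_of_forall fun x => ⟨y, Or.inl rfl, hy⟩
  · have : {x | (selPts y z r x ∩ V).Nonempty}
        = ⋃ n, ⋃ (_ : z n ∈ V), ⋂ i ∈ Set.Iic n, r i := by
      ext x
      simp only [mem_ofPred_eq, mem_iUnion, mem_iInter, Set.mem_Iic]
      constructor
      · rintro ⟨w, rfl | ⟨n, rfl, hn⟩, hw⟩
        · exact absurd hw hy
        · exact ⟨n, hw, hn⟩
      · rintro ⟨n, hw, hn⟩
        exact ⟨z n, Or.inr ⟨n, rfl, hn⟩, hw⟩
    rw [this]
    exact isOpen_iUnion fun n => isOpen_iUnion fun _ =>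
      (Set.finite_Iic n).isOpen_biInter fun i _ => hr i

theorem iInter_closure_selPts {X Y : Type*} [TopologicalSpace Y] {B : ℕ → Set Y}
    (hB : SICC B) (y : Y) (hy : y ∈ B 0) (z : ℕ → Y) (hz : ∀ n, z n ∈ B (n + 1))
    (hz' : ∀ n, z n ∉ B n) (r : ℕ → Set X) :
    (⋂ n, {x | (closure (selPts y z r x) ∩ (B n)ᶜ).Nonempty}) = ⋂ n, r n := by
  have hmono : Monotone B := monotone_nat_of_le_succ fun n => (hB.2.2.2 n).subset
  ext x
  simp only [mem_iInter, mem_ofPred_eq]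
  constructor
  · intro h n
    by_contra hx
    obtain ⟨w, hw, hwB⟩ := h n
    refine hwB (closure_minimal ?_ (hB.1 n) hw)
    rintro w (rfl | ⟨k, rfl, hk⟩)
    · exact hmono (Nat.zero_le n) hy
    · have hkn : k < n := by
        by_contra hkn
        exact hx (hk n (not_lt.1 hkn))
      exact hmono hkn (hz k)
  · intro h n
    exact ⟨z n, subset_closure (Or.inr ⟨n, rfl, fun i _ => h i⟩), hz' n⟩

theorem statement7 {X Y : Type*} [TopologicalSpace X] [T2Space X]
    [TopologicalSpace Y] [T2Space Y] (B : ℕ → Set Y) (hB : SICC B) :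
    SemiStratifiable X ↔
      ∃ φ : Set X → X → Set Y,
        (∀ F : Set X, IsClosed F → LSCMap (φ F)) ∧
        (∀ F : Set X, IsClosed F → F = ⋂ n, {x | (φ F x ∩ (B n)ᶜ).Nonempty}) ∧
        (∀ F₁ F₂ : Set X, IsClosed F₁ → IsClosed F₂ → F₁ ⊆ F₂ →
          ∀ x, φ F₁ x ⊆ φ F₂ x) := by
  constructor
  · rintro ⟨ρ, hopen, hint, hmon⟩
    obtain ⟨y, hy⟩ := hB.2.2.1
    choose z hz hz' using fun n => Set.exists_of_ssubset (hB.2.2.2 n)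
    refine ⟨fun F x => closure (selPts y z (fun n => ρ n F) x), fun F hF => ?_, fun F hF => ?_,
      fun F₁ F₂ h₁ h₂ h x => closure_mono ?_⟩
    · exact lscMap_closure_selPts y z _ fun n => hopen n F hF
    · exact (hint F hF).trans (iInter_closure_selPts hB y hy z hz hz' _).symm
    · rintro w (rfl | ⟨n, rfl, hn⟩)
      · exact Or.inl rfl
      · exact Or.inr ⟨n, rfl, fun i hi => hmon i F₁ F₂ h₁ h₂ h (hn i hi)⟩
  · rintro ⟨φ, hlsc, hint, hmon⟩
    refine ⟨fun n F => {x | (φ F x ∩ (B n)ᶜ).Nonempty}, fun n F hF => ?_, hint,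
      fun n F H hF hH h x hx => ?_⟩
    · exact (hlsc F hF).2 _ (hB.1 n).isOpen_compl
    · exact Set.Nonempty.mono (Set.inter_subset_inter_left _ (hmon F H hF hH h x)) hx
end

section
/- Let Y be a Hausdorff space with a strictly increasing closed cover {B_n}_{n∈ℕ}. A Hausdorff space X is stratifiable if and only if to each closed set F ⊆ X one can assign a lower semi-continuous set-valued map φ_F : X → F(Y) such that: (G) for every closed F, F = ⋂_{n∈ℕ} φ_F^{-1}[Y∖B_n]; (m) if F₁ ⊆ F₂ are closed, then φ_{F₁}(x) ⊆ φ_{F₂}(x) for every x ∈ X; and (⋄) for every closed F, φ_F is locally bounded on X∖F, i.e. every x ∉ F has an open neighborhood O and an n ∈ ℕ with O ⊆ φ_F^#[B_n]. -/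
/-! A stratification `ρ` and an assignment `φ` are obtained from one another by recording how deep a
point lies. From `φ`, put `ρ n F = {x | φ F x ⊄ B n}`, which is open by lower semi-continuity; local
boundedness off `F` says exactly that every `x ∉ F` avoids the closure of some `ρ n F`.
From `ρ`, let `φ F x` be the union of the `B n` for which `x` lies in all of
`ρ 0 F, …, ρ (n - 1) F`. This is `Y` on `F` and a single `B N` off `F` (lemma `depthMap_eq`), so it
is closed-valued, and it is bounded by `B N` on the complement of the closure of `ρ N F`. -/

open Set Filter Topology TopologicalSpace

/-- `X` is stratifiable. -/
def Stratifiable (X : Type*) [TopologicalSpace X] : Prop :=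
  ∃ ρ : ℕ → Set X → Set X,
    (∀ (n : ℕ) (F : Set X), IsClosed F → IsOpen (ρ n F)) ∧
    (∀ F : Set X, IsClosed F → F = ⋂ n, ρ n F) ∧
    (∀ F : Set X, IsClosed F → F = ⋂ n, closure (ρ n F)) ∧
    ∀ (n : ℕ) (F H : Set X), IsClosed F → IsClosed H → F ⊆ H → ρ n F ⊆ ρ n H

/-- For a sequence `U` of sets in `X`, the set-valued map sending `x` to the union of all `B n`
such that `x` belongs to the first `n` sets `U 0, …, U (n - 1)`. -/
def depthMap {X Y : Type*} (B : ℕ → Set Y) (U : ℕ → Set X) (x : X) : Set Y :=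
  {y | ∃ n, (∀ i < n, x ∈ U i) ∧ y ∈ B n}

theorem depthMap_subset {X Y : Type*} {B : ℕ → Set Y} (hB : Monotone B) {U : ℕ → Set X} {x : X}
    {N : ℕ} (hx : x ∉ U N) : depthMap B U x ⊆ B N := by
  rintro y ⟨n, hn, hy⟩
  exact hB (not_lt.1 fun h => hx (hn N h)) hy

theorem depthMap_of_mem {X Y : Type*} {B : ℕ → Set Y} (hB : (⋃ n, B n) = Set.univ)
    {U : ℕ → Set X} {x : X} (hx : ∀ n, x ∈ U n) : depthMap B U x = Set.univ := by
  refine Set.eq_univ_of_forall fun y => ?_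
  obtain ⟨n, hn⟩ := Set.mem_iUnion.1 (hB ▸ Set.mem_univ y)
  exact ⟨n, fun i _ => hx i, hn⟩

theorem depthMap_eq {X Y : Type*} {B : ℕ → Set Y} (hB : Monotone B) (hU : (⋃ n, B n) = Set.univ)
    (U : ℕ → Set X) (x : X) : depthMap B U x = Set.univ ∨ ∃ N, depthMap B U x = B N := by
  classical
  by_cases h : ∀ n, x ∈ U n
  · exact Or.inl (depthMap_of_mem hU h)
  · push Not at h
    -- The relevant `N` is the first index at which `x` leaves the sequence `U`.
    refine Or.inr ⟨Nat.find h, (depthMap_subset hB (Nat.find_spec h)).antisymm fun y hy => ?_⟩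
    exact ⟨Nat.find h, fun i hi => not_not.1 (Nat.find_min h hi), hy⟩

theorem depthMap_lsc {X Y : Type*} [TopologicalSpace X] [TopologicalSpace Y] {B : ℕ → Set Y}
    (hB : SICC B) {U : ℕ → Set X} (hU : ∀ n, IsOpen (U n)) : LSCMap (depthMap B U) := by
  have hmono : Monotone B := monotone_nat_of_le_succ fun n => (hB.2.2.2 n).subset
  refine ⟨fun x => ⟨?_, ?_⟩, fun V _ => ?_⟩
  · obtain ⟨y, hy⟩ := hB.2.2.1
    exact ⟨y, 0, fun i hi => absurd hi (Nat.not_lt_zero i), hy⟩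
  · rcases depthMap_eq hmono hB.2.1 U x with h | ⟨N, h⟩
    · rw [h]; exact isClosed_univ
    · rw [h]; exact hB.1 N
  · have h : {x | (depthMap B U x ∩ V).Nonempty} =
        ⋃ n, ⋃ _ : (B n ∩ V).Nonempty, ⋂ i ∈ Set.Iio n, U i := by
      ext x
      simp only [Set.mem_ofPred_eq, Set.mem_iUnion, Set.mem_iInter, Set.mem_Iio]
      constructor
      · rintro ⟨y, ⟨n, hn, hy⟩, hV⟩
        exact ⟨n, ⟨y, hy, hV⟩, hn⟩
      · rintro ⟨n, ⟨y, hy, hV⟩, hn⟩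
        exact ⟨y, ⟨n, hn, hy⟩, hV⟩
    rw [h]
    exact isOpen_iUnion fun n => isOpen_iUnion fun _ =>
      (Set.finite_Iio n).isOpen_biInter fun i _ => hU i

theorem statement8 {X Y : Type*} [TopologicalSpace X] [T2Space X]
    [TopologicalSpace Y] [T2Space Y] (B : ℕ → Set Y) (hB : SICC B) :
    Stratifiable X ↔
      ∃ φ : Set X → X → Set Y,
        (∀ F : Set X, IsClosed F → LSCMap (φ F)) ∧
        (∀ F : Set X, IsClosed F → F = ⋂ n, {x | (φ F x ∩ (B n)ᶜ).Nonempty}) ∧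
        (∀ F₁ F₂ : Set X, IsClosed F₁ → IsClosed F₂ → F₁ ⊆ F₂ →
          ∀ x, φ F₁ x ⊆ φ F₂ x) ∧
        (∀ F : Set X, IsClosed F → ∀ x ∉ F,
          ∃ O : Set X, IsOpen O ∧ x ∈ O ∧ ∃ n : ℕ, O ⊆ {y | φ F y ⊆ B n}) := by
  have hmono : Monotone B := monotone_nat_of_le_succ fun n => (hB.2.2.2 n).subset
  constructor
  · rintro ⟨ρ, hopen, hint, hcl, hm⟩
    refine ⟨fun F => depthMap B fun n => ρ n F, fun F hF => depthMap_lsc hB fun n => hopen n F hF,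
      fun F hF => ?_, fun F₁ F₂ h₁ h₂ h x => ?_, fun F hF x hx => ?_⟩
    · ext x
      simp only [Set.mem_iInter, Set.mem_ofPred_eq]
      constructor
      · intro hx n
        rw [hint F hF] at hx
        rw [depthMap_of_mem hB.2.1 (Set.mem_iInter.1 hx), Set.univ_inter]
        obtain ⟨y, _, hy⟩ := Set.exists_of_ssubset (hB.2.2.2 n)
        exact ⟨y, hy⟩
      · intro hx
        rw [hint F hF]
        refine Set.mem_iInter.2 fun n => by_contra fun hn => ?_
        obtain ⟨y, hy, hyn⟩ := hx n
        exact hyn (depthMap_subset (U := fun n => ρ n F) hmono hn hy)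
    · rintro y ⟨n, hn, hy⟩
      exact ⟨n, fun i hi => hm i F₁ F₂ h₁ h₂ h (hn i hi), hy⟩
    · rw [hcl F hF, Set.mem_iInter, not_forall] at hx
      obtain ⟨N, hN⟩ := hx
      exact ⟨(closure (ρ N F))ᶜ, isClosed_closure.isOpen_compl, hN, N, fun z hz =>
        depthMap_subset (U := fun n => ρ n F) hmono fun h => hz (subset_closure h)⟩
  · rintro ⟨φ, hlsc, hG, hm, hb⟩
    refine ⟨fun n F => {x | (φ F x ∩ (B n)ᶜ).Nonempty},
      fun n F hF => (hlsc F hF).2 _ (hB.1 n).isOpen_compl, hG, fun F hF => ?_,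
      fun n F H hF hH h x hx => hx.mono (Set.inter_subset_inter_left _ (hm F H hF hH h x))⟩
    refine Set.Subset.antisymm (fun x hx => ?_) fun x hx => by_contra fun hxF => ?_
    · rw [hG F hF] at hx
      exact Set.mem_iInter.2 fun n => subset_closure (Set.mem_iInter.1 hx n)
    · obtain ⟨O, hO, hxO, n, hn⟩ := hb F hF x hxF
      obtain ⟨z, hzO, y, hy, hyn⟩ := mem_closure_iff.1 (Set.mem_iInter.1 hx n) O hO hxO
      exact hyn (hn hzO hy)
end

section
/- Let Y be a Hausdorff space with a strictly increasing closed cover {B_n}_{n∈ℕ}. A Hausdorff space X is semi-metrizable if and only if to each closed set F ⊆ X one can assign a lower semi-continuous set-valued map φ_F : X → F(Y) such that: (G) for every closed F, F = ⋂_{n∈ℕ} φ_F^{-1}[Y∖B_n]; (m) if F₁ ⊆ F₂ are closed, then φ_{F₁}(x) ⊆ φ_{F₂}(x) for every x ∈ X; and (b_S) for every x ∈ X and every closed F with x ∉ F, there exists n ∈ ℕ with F ⊆ φ_{{x}}^#[B_n], where φ_{{x}} is the map assigned to the closed set {x}. -/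
/-!
Both conditions are equivalent to the existence of open sets `U n F` (for `F` closed), decreasing in
`n` and increasing in `F`, with `⋂ n, U n F = F`, such that every closed `F` not containing `x`
misses some `U n {x}`; the last property says that the `U n {x}` form a neighbourhood base at `x`.

The maps `φ` and the sets `U` determine each other by `U n F = {x | φ F x ⊈ B n}` and
`φ F x = B 0 ∪ ⋃ {B (n + 1) | x ∈ U n F}`; the value of the latter is some `B m` or all of `Y`,
hence closed, and lower semi-continuity amounts to openness of the `U n F`.

From a semi-metric `d`, take `U n F` to be the interior of the `1 / (n + 1)`-neighbourhood of `F`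
(`exists_openFamily`). Conversely, call `x` and `y` `n`-close if `x ∈ U n {y}` or `y ∈ U n {x}`, and
let `d x y` be `1 / (n + 1)` for the least `n` at which they are not `n`-close, and `0` if there is
no such `n` (`semiMetrizable_of_openFamily`). If points `y n ∉ V` were `n`-close to `x` for every
`n`, where `V` is an open neighbourhood of `x`, then `x ∈ U n {y n} ⊆ U n Vᶜ` for all large `n`,
which forces `x ∈ Vᶜ`.
-/

open Set Filter Topology TopologicalSpace

/-- A semi-metric on the topological space `X`. -/
def IsSemiMetric {X : Type*} [TopologicalSpace X] (d : X → X → ℝ) : Prop :=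
  (∀ x y, 0 ≤ d x y) ∧ (∀ x y, d x y = 0 ↔ x = y) ∧ (∀ x y, d x y = d y x) ∧
    ∀ x : X, (𝓝 x).HasBasis (fun r : ℝ => 0 < r) fun r => {y | d x y < r}

/-- `X` is semi-metrizable. -/
def SemiMetrizable (X : Type*) [TopologicalSpace X] : Prop :=
  ∃ d : X → X → ℝ, IsSemiMetric d

/-- A family of open expansions of the closed sets of `X`: monotone in the set, decreasing in the
index to the given closed set, and such that the expansions of a point form a neighbourhood base at
that point. -/
structure OpenFamily {X : Type*} [TopologicalSpace X] (U : ℕ → Set X → Set X) : Prop where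
  isOpen : ∀ n F, IsClosed F → IsOpen (U n F)
  anti : ∀ m n F, m ≤ n → IsClosed F → U n F ⊆ U m F
  mono : ∀ n F₁ F₂, IsClosed F₁ → IsClosed F₂ → F₁ ⊆ F₂ → U n F₁ ⊆ U n F₂
  iInter : ∀ F, IsClosed F → F = ⋂ n, U n F
  base : ∀ x F, IsClosed F → x ∉ F → ∃ n, ∀ y ∈ F, y ∉ U n {x}

lemma exists_openFamily {X : Type*} [TopologicalSpace X] (h : SemiMetrizable X) :
    ∃ U : ℕ → Set X → Set X, OpenFamily U := by
  obtain ⟨d, -, -, hsymm, hbas⟩ := h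
  -- a closed set has positive distance from each point outside it
  have key : ∀ (x : X) (F : Set X), IsClosed F → x ∉ F →
      ∃ n : ℕ, ∀ y ∈ F, ¬ d x y < 1 / ((n : ℝ) + 1) := by
    intro x F hF hx
    obtain ⟨r, hr, hsub⟩ := (hbas x).mem_iff.1 (hF.isOpen_compl.mem_nhds hx)
    obtain ⟨n, hn⟩ := exists_nat_one_div_lt hr
    exact ⟨n, fun y hy hlt => hsub (show d x y < r from hlt.trans hn) hy⟩
  refine ⟨fun n F => interior {y | ∃ x ∈ F, d x y < 1 / ((n : ℝ) + 1)},
    fun _ _ _ => isOpen_interior, ?_, ?_, ?_, ?_⟩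
  · intro m n F hmn _
    refine interior_mono ?_
    rintro y ⟨x, hx, hlt⟩
    exact ⟨x, hx, hlt.trans_le (Nat.one_div_le_one_div hmn)⟩
  · intro n F₁ F₂ _ _ h12
    refine interior_mono ?_
    rintro y ⟨x, hx, hlt⟩
    exact ⟨x, h12 hx, hlt⟩
  · intro F hF
    apply Subset.antisymm
    · intro x hx
      refine mem_iInter.2 fun n => mem_interior_iff_mem_nhds.2 ?_
      exact mem_of_superset ((hbas x).mem_of_mem Nat.one_div_pos_of_nat) fun y hy => ⟨x, hx, hy⟩
    · intro x hx
      by_contra hxF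
      obtain ⟨n, hn⟩ := key x F hF hxF
      obtain ⟨y, hy, hlt⟩ := interior_subset (mem_iInter.1 hx n)
      exact hn y hy (hsymm x y ▸ hlt)
  · intro x F hF hx
    obtain ⟨n, hn⟩ := key x F hF hx
    refine ⟨n, fun y hy hyU => ?_⟩
    obtain ⟨z, rfl, hlt⟩ := interior_subset hyU
    exact hn y hy hlt

open Classical in
/-- The function equal to `1 / (n + 1)`, with `n` least such that `P n x y` fails, and to `0` if
there is no such `n`. -/
noncomputable def distOf {X : Type*} (P : ℕ → X → X → Prop) (x y : X) : ℝ :=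
  if h : ∃ n, ¬ P n x y then 1 / ((Nat.find h : ℝ) + 1) else 0

lemma distOf_lt_iff {X : Type*} {P : ℕ → X → X → Prop}
    (hanti : ∀ m n x y, m ≤ n → P n x y → P m x y) (n : ℕ) (x y : X) :
    distOf P x y < 1 / ((n : ℝ) + 1) ↔ P n x y := by
  classical
  unfold distOf
  split_ifs with h
  · rw [one_div_lt_one_div (by positivity) (by positivity), add_lt_add_iff_right, Nat.cast_lt,
      Nat.lt_find_iff]
    exact ⟨fun H => not_not.1 (H n le_rfl), fun H m hm => not_not.2 (hanti m n x y hm H)⟩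
  · push Not at h
    exact ⟨fun _ => h n, fun _ => Nat.one_div_pos_of_nat⟩

lemma semiMetrizable_of_openFamily {X : Type*} [TopologicalSpace X] [T1Space X]
    {U : ℕ → Set X → Set X} (hU : OpenFamily U) : SemiMetrizable X := by
  let P : ℕ → X → X → Prop := fun n x y => x ∈ U n {y} ∨ y ∈ U n {x}
  have hanti : ∀ m n x y, m ≤ n → P n x y → P m x y := fun m n x y hmn =>
    Or.imp (fun h => hU.anti m n _ hmn isClosed_singleton h)
      (fun h => hU.anti m n _ hmn isClosed_singleton h)
  have hself : ∀ n x, x ∈ U n {x} := fun n x =>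
    mem_iInter.1 ((hU.iInter {x} isClosed_singleton).subset rfl) n
  have hlt := distOf_lt_iff hanti
  have hnonneg : ∀ x y, 0 ≤ distOf P x y := by
    intro x y
    unfold distOf
    split_ifs <;> positivity
  have hsymm : ∀ x y, distOf P x y = distOf P y x := by
    intro x y
    have : (fun n => P n x y) = fun n => P n y x := funext fun n => propext or_comm
    have hP : ∀ p q : ℕ → Prop, p = q → distOf (fun n (_ _ : X) => p n) x y =
        distOf (fun n (_ _ : X) => q n) y x := by
      rintro p _ rfl
      rfl
    exact hP _ _ this
  have hball : ∀ (x : X) (V : Set X), IsOpen V → x ∈ V → ∃ n, ∀ y, P n x y → y ∈ V := by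
    intro x V hV hx
    by_contra! hcon
    choose y hP hyV using hcon
    obtain ⟨n₀, hn₀⟩ := hU.base x Vᶜ hV.isClosed_compl (not_not.2 hx)
    have hmem : ∀ n, x ∈ U n Vᶜ := by
      intro n
      -- the index must be at least `n₀` to exclude `y k ∈ U k {x}`
      let k := max n n₀
      have hk : x ∈ U k {y k} := by
        rcases hP k with h | h
        · exact h
        · exact (hn₀ (y k) (hyV k)
            (hU.anti n₀ k _ (le_max_right _ _) isClosed_singleton h)).elim
      exact hU.anti n k _ (le_max_left _ _) hV.isClosed_compl
        (hU.mono k _ _ isClosed_singleton hV.isClosed_compl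
          (singleton_subset_iff.2 (hyV k)) hk)
    exact (hU.iInter Vᶜ hV.isClosed_compl).symm.subset (mem_iInter.2 hmem) hx
  refine ⟨distOf P, hnonneg, ?_, hsymm, ?_⟩
  · intro x y
    constructor
    · intro h0
      by_contra hne
      obtain ⟨n, hn⟩ := hball x {y}ᶜ isOpen_compl_singleton hne
      exact hn y ((hlt n x y).1 (h0 ▸ Nat.one_div_pos_of_nat)) rfl
    · rintro rfl
      have : ¬ ∃ n, ¬ P n x x := fun ⟨n, hn⟩ => hn (Or.inl (hself n x))
      exact dif_neg this
  · intro x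
    refine ⟨fun t => ⟨fun ht => ?_, ?_⟩⟩
    · obtain ⟨V, hVt, hV, hx⟩ := mem_nhds_iff.1 ht
      obtain ⟨n, hn⟩ := hball x V hV hx
      exact ⟨1 / ((n : ℝ) + 1), Nat.one_div_pos_of_nat, fun y hy => hVt (hn y ((hlt n x y).1 hy))⟩
    · rintro ⟨r, hr, hsub⟩
      obtain ⟨n, hn⟩ := exists_nat_one_div_lt hr
      refine mem_of_superset ((hU.isOpen n {x} isClosed_singleton).mem_nhds (hself n x)) ?_
      exact fun y hy => hsub (((hlt n x y).2 (Or.inr hy)).trans hn)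

theorem statement9 {X Y : Type*} [TopologicalSpace X] [T2Space X]
    [TopologicalSpace Y] [T2Space Y] (B : ℕ → Set Y) (hB : SICC B) :
    SemiMetrizable X ↔
      ∃ φ : Set X → X → Set Y,
        (∀ F : Set X, IsClosed F → LSCMap (φ F)) ∧
        (∀ F : Set X, IsClosed F → F = ⋂ n, {x | (φ F x ∩ (B n)ᶜ).Nonempty}) ∧
        (∀ F₁ F₂ : Set X, IsClosed F₁ → IsClosed F₂ → F₁ ⊆ F₂ →
          ∀ x, φ F₁ x ⊆ φ F₂ x) ∧
        (∀ (x : X) (F : Set X), IsClosed F → x ∉ F →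
          ∃ n : ℕ, F ⊆ {y | φ ({x} : Set X) y ⊆ B n}) := by
  obtain ⟨hcl, hcov, hne, hss⟩ := hB
  have hmono : Monotone B := monotone_nat_of_le_succ fun n => (hss n).subset
  constructor
  · intro h
    obtain ⟨U, hU⟩ := exists_openFamily h
    let φ : Set X → X → Set Y := fun F x => {y | y ∈ B 0 ∨ ∃ n, x ∈ U n F ∧ y ∈ B (n + 1)}
    have hφ : ∀ F, IsClosed F → ∀ n x, (φ F x ∩ (B n)ᶜ).Nonempty ↔ x ∈ U n F := by
      intro F hF n x
      constructor
      · rintro ⟨y, hy | ⟨k, hk, hy⟩, hyn⟩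
        · exact (hyn (hmono (Nat.zero_le n) hy)).elim
        · refine hU.anti n k F ?_ hF hk
          by_contra hlt
          exact hyn (hmono (by omega) hy)
      · intro hx
        -- strictness of the cover is what separates the levels
        obtain ⟨y, hy, hyn⟩ := exists_of_ssubset (hss n)
        exact ⟨y, Or.inr ⟨n, hx, hy⟩, hyn⟩
    refine ⟨φ, ?_, ?_, ?_, ?_⟩
    · intro F hF
      refine ⟨fun x => ⟨hne.mono fun y hy => Or.inl hy, ?_⟩, ?_⟩
      · by_cases hx : ∃ n, x ∉ U n F
        · classical
          have : φ F x = B (Nat.find hx) := by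
            apply Subset.antisymm
            · by_contra hns
              obtain ⟨y, hy, hyn⟩ := not_subset.1 hns
              exact Nat.find_spec hx ((hφ F hF _ x).1 ⟨y, hy, hyn⟩)
            · intro y hy
              rcases Nat.eq_zero_or_eq_succ_pred (Nat.find hx) with h0 | h0
              · exact Or.inl (h0 ▸ hy)
              · refine Or.inr ⟨(Nat.find hx).pred, ?_, ?_⟩
                · exact not_not.1 (Nat.find_min hx (by omega))
                · exact (congrArg B h0).subset hy
          rw [this]
          exact hcl _
        · push Not at hx
          have : φ F x = univ := by
            refine eq_univ_of_forall fun y => ?_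
            obtain ⟨n, hn⟩ := mem_iUnion.1 (hcov.symm.subset (mem_univ y))
            exact Or.inr ⟨n, hx n, hmono n.le_succ hn⟩
          rw [this]
          exact isClosed_univ
      · intro V _
        have : {x | (φ F x ∩ V).Nonempty} =
            {_x | (B 0 ∩ V).Nonempty} ∪ ⋃ n, (U n F ∩ {_x | (B (n + 1) ∩ V).Nonempty}) := by
          ext x
          simp only [mem_union, mem_iUnion, mem_inter_iff, mem_ofPred_eq]
          constructor
          · rintro ⟨y, hy | ⟨n, hn, hy⟩, hyV⟩
            · exact Or.inl ⟨y, hy, hyV⟩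
            · exact Or.inr ⟨n, hn, y, hy, hyV⟩
          · rintro (⟨y, hy, hyV⟩ | ⟨n, hn, y, hy, hyV⟩)
            · exact ⟨y, Or.inl hy, hyV⟩
            · exact ⟨y, Or.inr ⟨n, hn, hy⟩, hyV⟩
        rw [this]
        exact isOpen_const.union
          (isOpen_iUnion fun n => (hU.isOpen n F hF).inter isOpen_const)
    · intro F hF
      simp only [hφ F hF, ofPred_mem_eq]
      exact hU.iInter F hF
    · rintro F₁ F₂ h₁ h₂ h12 x y (hy | ⟨n, hn, hy⟩)
      · exact Or.inl hy
      · exact Or.inr ⟨n, hU.mono n F₁ F₂ h₁ h₂ h12 hn, hy⟩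
    · intro x F hF hx
      obtain ⟨n, hn⟩ := hU.base x F hF hx
      refine ⟨n, fun y hy z hz => ?_⟩
      by_contra hzn
      exact hn y hy ((hφ {x} isClosed_singleton n y).1 ⟨z, hz, hzn⟩)
  · rintro ⟨φ, hlsc, hG, hm, hb⟩
    refine semiMetrizable_of_openFamily (U := fun n F => {x | (φ F x ∩ (B n)ᶜ).Nonempty})
      ⟨?_, ?_, ?_, hG, ?_⟩
    · exact fun n F hF => (hlsc F hF).2 _ (hcl n).isOpen_compl
    · rintro m n F hmn _ x ⟨y, hy, hyn⟩
      exact ⟨y, hy, fun h => hyn (hmono hmn h)⟩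
    · rintro n F₁ F₂ h₁ h₂ h12 x ⟨y, hy, hyn⟩
      exact ⟨y, hm F₁ F₂ h₁ h₂ h12 x hy, hyn⟩
    · intro x F hF hx
      obtain ⟨n, hn⟩ := hb x F hF hx
      exact ⟨n, fun y hy ⟨z, hz, hzn⟩ => hzn (hn hy hz)⟩
end

section
/- Let Y be a Hausdorff space with a strictly increasing closed cover {B_n}_{n∈ℕ}. A Hausdorff space X is K-semimetrizable if and only if to each closed set F ⊆ X one can assign a lower semi-continuous set-valued map φ_F : X → F(Y) such that: (G) for every closed F, F = ⋂_{n∈ℕ} φ_F^{-1}[Y∖B_n]; (m) if F₁ ⊆ F₂ are closed, then φ_{F₁}(x) ⊆ φ_{F₂}(x) for every x ∈ X; (b_S) for every x ∈ X and every closed F with x ∉ F, there exists n ∈ ℕ with F ⊆ φ_{{x}}^#[B_n]; and (b_C) for all compact sets K, H ⊆ X with K ∩ H = ∅, there exists n ∈ ℕ with H ⊆ φ_K^#[B_n], where φ_K is the map assigned to the closed set K. -/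
/-!
Both sides are equivalent to the existence of a family `G n F` of open sets, decreasing in `n` and
monotone in the closed set `F`, with `F = ⋂ n, G n F`, such that some `G n {x}` misses any given
closed set not containing `x`, and some `G n K` misses `H` for disjoint compact `K`, `H`
(`KExpansion`).

A semi-metric `d` gives `G n F` as the interior of the `1/(n+1)`-neighborhood of `F`. Conversely,
from `G` one sets, for `x ≠ y`, `d x y = 1/(n+1)` with `n` least such that `y ∉ G n {x}` and
`x ∉ G n {y}`; then `d x y < 1/(m+1)` iff `y ∈ G m {x}` or `x ∈ G m {y}`. Balls around `x` contain
some `G m {x}`. They are small because, for `F` closed and `x ∉ F`, some `G m {x}` misses `F`, and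
some `G n F` misses `x`, hence so does every `G n {y} ⊆ G n F` with `y ∈ F`. The same monotonicity
bounds `d` from below on disjoint compact sets.

The translation between `G` and `φ` is `G n F = {x | φ F x ⊈ B n}` in one direction and
`φ F x = ⋂ {B n | x ∉ G n F}` in the other. The latter is lower semi-continuous since each `y`
lies outside only finitely many `B n`.
-/

open Set Filter Topology TopologicalSpace

/-- `X` is K-semimetrizable. -/
def KSemiMetrizable (X : Type*) [TopologicalSpace X] : Prop :=
  ∃ d : X → X → ℝ, IsSemiMetric d ∧
    ∀ K H : Set X, IsCompact K → IsCompact H → K.Nonempty → H.Nonempty →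
      K ∩ H = ∅ → ∃ ε : ℝ, 0 < ε ∧ ∀ x ∈ K, ∀ y ∈ H, ε ≤ d x y

/-- An expansion of each closed set `F` into a decreasing sequence of open sets `G n F` with
intersection `F`, monotone in `F` and separating points from closed sets and compact sets from
compact sets. -/
structure KExpansion {X : Type*} [TopologicalSpace X] (G : ℕ → Set X → Set X) : Prop where
  isOpen : ∀ n F, IsClosed F → IsOpen (G n F)
  anti : ∀ F, IsClosed F → ∀ m n, m ≤ n → G n F ⊆ G m F
  mem_iff : ∀ F, IsClosed F → ∀ x, x ∈ F ↔ ∀ n, x ∈ G n F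
  mono : ∀ F₁ F₂, IsClosed F₁ → IsClosed F₂ → F₁ ⊆ F₂ → ∀ n, G n F₁ ⊆ G n F₂
  point : ∀ x F, IsClosed F → x ∉ F → ∃ n, ∀ y ∈ F, y ∉ G n {x}
  compact : ∀ K H, IsCompact K → IsCompact H → K ∩ H = ∅ → ∃ n, ∀ y ∈ H, y ∉ G n K

theorem KSemiMetrizable.exists_expansion {X : Type*} [TopologicalSpace X]
    (h : KSemiMetrizable X) : ∃ G : ℕ → Set X → Set X, KExpansion G := by
  obtain ⟨d, ⟨d0, deq, dsymm, dbasis⟩, dK⟩ := h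
  -- A closed set missing `x` is at positive distance from `x`.
  have far : ∀ x F, IsClosed F → x ∉ F → ∃ n : ℕ, ∀ y ∈ F, 1 / ((n : ℝ) + 1) ≤ d x y := by
    intro x F hF hx
    obtain ⟨r, hr, hsub⟩ := (dbasis x).mem_iff.1 (hF.isOpen_compl.mem_nhds hx)
    obtain ⟨n, hn⟩ := exists_nat_one_div_lt hr
    refine ⟨n, fun y hy => ?_⟩
    by_contra hlt
    exact hsub (show d x y < r by linarith) hy
  have pos : ∀ n : ℕ, (0 : ℝ) < 1 / ((n : ℝ) + 1) := fun n => by positivity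
  refine ⟨fun n F => interior {y | ∃ x ∈ F, d x y < 1 / ((n : ℝ) + 1)}, ?_, ?_, ?_, ?_, ?_, ?_⟩
  · exact fun n F _ => isOpen_interior
  · intro F _ m n hmn
    apply interior_mono
    rintro y ⟨x, hx, hxy⟩
    exact ⟨x, hx, hxy.trans_le (Nat.one_div_le_one_div hmn)⟩
  · intro F hF x
    constructor
    · intro hx n
      rw [mem_interior_iff_mem_nhds]
      exact mem_of_superset ((dbasis x).mem_of_mem (pos n)) fun y hy => ⟨x, hx, hy⟩
    · intro hx
      by_contra hxF
      obtain ⟨n, hn⟩ := far x F hF hxF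
      obtain ⟨y, hy, hyx⟩ := interior_subset (hx n)
      have := hn y hy
      rw [dsymm] at hyx
      linarith
  · intro F₁ F₂ _ _ h12 n
    apply interior_mono
    rintro y ⟨x, hx, hxy⟩
    exact ⟨x, h12 hx, hxy⟩
  · intro x F hF hx
    obtain ⟨n, hn⟩ := far x F hF hx
    refine ⟨n, fun y hy hmem => ?_⟩
    obtain ⟨z, rfl, hz⟩ := interior_subset hmem
    have := hn y hy
    linarith
  · intro K H hK hH hKH
    rcases K.eq_empty_or_nonempty with rfl | hKn
    · refine ⟨0, fun y _ hmem => ?_⟩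
      obtain ⟨z, hz, _⟩ := interior_subset hmem
      exact hz
    rcases H.eq_empty_or_nonempty with rfl | hHn
    · exact ⟨0, fun y hy => hy.elim⟩
    obtain ⟨ε, hε, hd⟩ := dK K H hK hH hKn hHn hKH
    obtain ⟨n, hn⟩ := exists_nat_one_div_lt hε
    refine ⟨n, fun y hy hmem => ?_⟩
    obtain ⟨z, hz, hzy⟩ := interior_subset hmem
    have := hd z hz y hy
    linarith

open Classical in
theorem KExpansion.kSemiMetrizable {X : Type*} [TopologicalSpace X] [T2Space X]
    {G : ℕ → Set X → Set X} (hG : KExpansion G) : KSemiMetrizable X := by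
  -- `S x y` is upward closed, nonempty exactly when `x ≠ y`; its least element measures how soon
  -- the expansions of `{x}` and `{y}` tell the two points apart.
  let S : X → X → Set ℕ := fun x y => {n | y ∉ G n {x} ∧ x ∉ G n {y}}
  let d : X → X → ℝ := fun x y => if x = y then 0 else 1 / ((sInf (S x y) : ℕ) + 1 : ℝ)
  have Ssymm : ∀ x y, S x y = S y x := fun x y => Set.ext fun n => And.comm
  have Sup : ∀ x y m n, m ≤ n → m ∈ S x y → n ∈ S x y := fun x y m n hmn hm =>
    ⟨fun h => hm.1 (hG.anti _ isClosed_singleton _ _ hmn h),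
      fun h => hm.2 (hG.anti _ isClosed_singleton _ _ hmn h)⟩
  have Sne : ∀ x y, x ≠ y → (S x y).Nonempty := by
    have key : ∀ x y : X, x ≠ y → ∃ n, y ∉ G n {x} := by
      intro x y hxy
      by_contra! hall
      exact hxy ((hG.mem_iff {x} isClosed_singleton y).2 hall).symm
    intro x y hxy
    obtain ⟨m, hm⟩ := key x y hxy
    obtain ⟨n, hn⟩ := key y x hxy.symm
    exact ⟨max m n, fun h => hm (hG.anti _ isClosed_singleton _ _ (le_max_left _ _) h),
      fun h => hn (hG.anti _ isClosed_singleton _ _ (le_max_right _ _) h)⟩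
  have self_mem : ∀ x n, x ∈ G n {x} := fun x n =>
    (hG.mem_iff {x} isClosed_singleton x).1 rfl n
  have pos : ∀ n : ℕ, (0 : ℝ) < 1 / ((n : ℝ) + 1) := fun n => by positivity
  have dlt : ∀ x y (m : ℕ), d x y < 1 / ((m : ℝ) + 1) ↔ m ∉ S x y := by
    intro x y m
    by_cases hxy : x = y
    · subst hxy
      simp only [d, if_true]
      exact ⟨fun _ h => h.1 (self_mem x m), fun _ => pos m⟩
    · simp only [d, if_neg hxy]
      rw [one_div_lt_one_div (by positivity) (by positivity)]
      constructor
      · intro h hm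
        have h1 : sInf (S x y) ≤ m := Nat.sInf_le hm
        have h2 : ((sInf (S x y) : ℕ) : ℝ) ≤ m := by exact_mod_cast h1
        linarith
      · intro h
        have h1 : m < sInf (S x y) := by
          by_contra! hle
          exact h (Sup _ _ _ _ hle (Nat.sInf_mem (Sne x y hxy)))
        have h2 : (m : ℝ) < (sInf (S x y) : ℕ) := by exact_mod_cast h1
        linarith
  refine ⟨d, ⟨?_, ?_, ?_, ?_⟩, ?_⟩
  · intro x y
    simp only [d]
    split_ifs
    · exact le_rfl
    · exact (pos _).le
  · intro x y
    simp only [d]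
    split_ifs with h
    · simp [h]
    · simp only [h, iff_false]
      exact (pos _).ne'
  · intro x y
    simp only [d, Ssymm x y, eq_comm (a := x)]
  · intro x
    refine ⟨fun U => ⟨fun hU => ?_, ?_⟩⟩
    · obtain ⟨V, hVU, hV, hxV⟩ := mem_nhds_iff.1 hU
      have hxF : x ∉ Vᶜ := fun h => h hxV
      obtain ⟨m, hm⟩ := hG.point x _ hV.isClosed_compl hxF
      obtain ⟨n, hn⟩ : ∃ n, x ∉ G n Vᶜ := by
        by_contra! hall
        exact hxF ((hG.mem_iff _ hV.isClosed_compl x).2 hall)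
      refine ⟨_, pos (max m n), fun y hy => hVU ?_⟩
      by_contra hyV
      refine (dlt x y _).1 hy ⟨fun h => ?_, fun h => ?_⟩
      · exact hm y hyV (hG.anti _ isClosed_singleton _ _ (le_max_left _ _) h)
      · exact hn (hG.mono _ _ isClosed_singleton hV.isClosed_compl
          (singleton_subset_iff.2 hyV) n
          (hG.anti _ isClosed_singleton _ _ (le_max_right _ _) h))
    · rintro ⟨r, hr, hsub⟩
      obtain ⟨n, hn⟩ := exists_nat_one_div_lt hr
      refine mem_of_superset ((hG.isOpen n {x} isClosed_singleton).mem_nhds (self_mem x n))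
        fun y hy => hsub ?_
      exact ((dlt x y n).2 fun h => h.1 hy).trans hn
  · intro K H hK hH _ _ hKH
    obtain ⟨m, hm⟩ := hG.compact K H hK hH hKH
    obtain ⟨n, hn⟩ := hG.compact H K hH hK (by rwa [inter_comm])
    refine ⟨_, pos (max m n), fun x hx y hy => ?_⟩
    by_contra! hlt
    refine (dlt x y _).1 hlt ⟨fun h => hm y hy ?_, fun h => hn x hx ?_⟩
    · exact hG.mono _ _ isClosed_singleton hK.isClosed (singleton_subset_iff.2 hx) m
        (hG.anti _ isClosed_singleton _ _ (le_max_left _ _) h)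
    · exact hG.mono _ _ isClosed_singleton hH.isClosed (singleton_subset_iff.2 hy) n
        (hG.anti _ isClosed_singleton _ _ (le_max_right _ _) h)

theorem statement10 {X Y : Type*} [TopologicalSpace X] [T2Space X]
    [TopologicalSpace Y] [T2Space Y] (B : ℕ → Set Y) (hB : SICC B) :
    KSemiMetrizable X ↔
      ∃ φ : Set X → X → Set Y,
        (∀ F : Set X, IsClosed F → LSCMap (φ F)) ∧
        (∀ F : Set X, IsClosed F → F = ⋂ n, {x | (φ F x ∩ (B n)ᶜ).Nonempty}) ∧
        (∀ F₁ F₂ : Set X, IsClosed F₁ → IsClosed F₂ → F₁ ⊆ F₂ →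
          ∀ x, φ F₁ x ⊆ φ F₂ x) ∧
        (∀ (x : X) (F : Set X), IsClosed F → x ∉ F →
          ∃ n : ℕ, F ⊆ {y | φ ({x} : Set X) y ⊆ B n}) ∧
        (∀ K H : Set X, IsCompact K → IsCompact H → K ∩ H = ∅ →
          ∃ n : ℕ, H ⊆ {x | φ K x ⊆ B n}) := by
  have Bmono : Monotone B := monotone_nat_of_le_succ fun n => (hB.2.2.2 n).subset
  obtain ⟨Bcl, Bun, B0, Bss⟩ := hB
  constructor
  · intro h
    obtain ⟨G, hG⟩ := h.exists_expansion
    have sub : ∀ F x n, x ∉ G n F → {y | ∀ n, x ∉ G n F → y ∈ B n} ⊆ B n :=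
      fun F x n hn y hy => hy n hn
    refine ⟨fun F x => {y | ∀ n, x ∉ G n F → y ∈ B n}, ?_, ?_, ?_, ?_, ?_⟩
    · intro F hF
      refine ⟨fun x => ⟨?_, ?_⟩, fun V _ => ?_⟩
      · obtain ⟨y, hy⟩ := B0
        exact ⟨y, fun n _ => Bmono (Nat.zero_le n) hy⟩
      · simp only [ofPred_forall]
        exact isClosed_iInter fun n => isClosed_iInter fun _ => Bcl n
      · rw [isOpen_iff_mem_nhds]
        rintro x ⟨y, hy, hyV⟩
        obtain ⟨k, hk⟩ := mem_iUnion.1 (Bun.symm ▸ mem_univ y : y ∈ ⋃ n, B n)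
        -- Only the indices `n < k` can exclude `y` from `φ F x'`; those with `y ∉ B n` have
        -- `x ∈ G n F`, an open condition.
        have hfin : {n | y ∉ B n}.Finite := (finite_lt_nat k).subset fun n hn => by
          by_contra hkn
          exact hn (Bmono (not_lt.1 hkn) hk)
        have hnhds : (⋂ n ∈ {n | y ∉ B n}, G n F) ∈ 𝓝 x :=
          (biInter_mem hfin).2 fun n hn =>
            (hG.isOpen n F hF).mem_nhds (by_contra fun hx => hn (hy n hx))
        refine mem_of_superset hnhds fun x' hx' => ⟨y, fun n hn => ?_, hyV⟩
        by_contra hyn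
        exact hn (mem_iInter₂.1 hx' n hyn)
    · intro F hF
      ext x
      rw [hG.mem_iff F hF x, mem_iInter]
      constructor
      · intro hx n
        obtain ⟨y, -, hy⟩ := exists_of_ssubset (Bss n)
        exact ⟨y, fun m hm => (hm (hx m)).elim, hy⟩
      · intro hx n
        by_contra hn
        obtain ⟨y, hy, hyn⟩ := hx n
        exact hyn (hy n hn)
    · intro F₁ F₂ h₁ h₂ h12 x y hy n hn
      exact hy n fun h => hn (hG.mono _ _ h₁ h₂ h12 n h)
    · intro x F hF hx
      obtain ⟨n, hn⟩ := hG.point x F hF hx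
      exact ⟨n, fun y hy => sub _ _ _ (hn y hy)⟩
    · intro K H hK hH hKH
      obtain ⟨n, hn⟩ := hG.compact K H hK hH hKH
      exact ⟨n, fun y hy => sub _ _ _ (hn y hy)⟩
  · rintro ⟨φ, hlsc, hGd, hm, hbS, hbC⟩
    refine KExpansion.kSemiMetrizable (G := fun n F => {x | (φ F x ∩ (B n)ᶜ).Nonempty})
      ⟨?_, ?_, ?_, ?_, ?_, ?_⟩
    · exact fun n F hF => (hlsc F hF).2 _ (Bcl n).isOpen_compl
    · rintro F _ m n hmn x ⟨y, hy, hyn⟩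
      exact ⟨y, hy, fun h => hyn (Bmono hmn h)⟩
    · intro F hF x
      rw [← mem_iInter, ← hGd F hF]
    · rintro F₁ F₂ h₁ h₂ h12 n x ⟨y, hy, hyn⟩
      exact ⟨y, hm _ _ h₁ h₂ h12 x hy, hyn⟩
    · intro x F hF hx
      obtain ⟨n, hn⟩ := hbS x F hF hx
      exact ⟨n, fun y hy ⟨z, hz, hzn⟩ => hzn (hn hy hz)⟩
    · intro K H hK hH hKH
      obtain ⟨n, hn⟩ := hbC K H hK hH hKH
      exact ⟨n, fun y hy ⟨z, hz, hzn⟩ => hzn (hn hy hz)⟩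
end

section
/- Let Y be a Hausdorff space with a strictly increasing closed cover {B_n}_{n∈ℕ}, and let X be a Hausdorff space. The following are equivalent: (a) X is o-semimetrizable; (b) to each closed set F ⊆ X one can assign a lower semi-continuous set-valued map φ_F : X → F(Y) satisfying (G) F = ⋂_{n∈ℕ} φ_F^{-1}[Y∖B_n] for every closed F, (m) F₁ ⊆ F₂ implies φ_{F₁}(x) ⊆ φ_{F₂}(x) for every x, and (S) φ_{{x}}(y) = φ_{{y}}(x) for all x, y ∈ X; (c) to each point x ∈ X one can assign a lower semi-continuous set-valued map φ_x : X → F(Y) satisfying (G) {x} = ⋂_{n∈ℕ} φ_x^{-1}[Y∖B_n] for every x, (b_S) for every x and every closed F with x ∉ F there exists n ∈ ℕ with F ⊆ φ_x^#[B_n], and (S) φ_x(y) = φ_y(x) for all x, y ∈ X. -/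
/-!
Set-valued maps into `Y` are traded for decreasing sequences of open sets of `X`.

A decreasing sequence of open sets `U n` yields the lower semi-continuous map `stairMap B U`, whose
value at `x` is the closure of the union of `B 0` and of all `B (n + 1)` with `x ∈ U n`; strictness
of the cover gives `(stairMap B U)⁻¹[Y ∖ B n] = U n`. For an o-semi-metric `d` and a closed set
`F`, the sets `{y | ∃ x ∈ F, d x y < 1 / (n + 1)}` are open, decrease to `F`, are monotone in `F`,
and depend symmetrically on `x, y` when `F = {x}`; so their stair maps satisfy (b).

From (b) to (c), restrict to singletons: if `x ∉ F`, then `φ F x ⊆ B n` for some `n`, and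
`φ {x} y = φ {y} x ⊆ φ F x ⊆ B n` for all `y ∈ F`.

From (c) to (a), the relations `φ x y ∩ (B n)ᶜ ≠ ∅` are symmetric, intersect in equality, and have
open sections forming a neighborhood base at each point. The semi-metric is `1 / (k + 1)`, with `k`
the first index at which the relation fails (`exists_dist_of_rel`).
-/

open Set Filter Topology TopologicalSpace

/-- `X` is o-semimetrizable. -/
def OSemiMetrizable (X : Type*) [TopologicalSpace X] : Prop :=
  ∃ d : X → X → ℝ, IsSemiMetric d ∧
    ∀ (x : X) (r : ℝ), 0 < r → IsOpen {y | d x y < r}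

/-- The set-valued map attached to a sequence `U` of subsets of `X`. For `U` decreasing and `B` an
increasing closed cover of `Y`, its value is `B 0` off `U 0`, `B (n + 1)` on `U n \ U (n + 1)`,
and `Y` on `⋂ n, U n`. The closure makes the values closed without any such assumption. -/
def stairMap {X Y : Type*} [TopologicalSpace Y] (B : ℕ → Set Y) (U : ℕ → Set X) (x : X) : Set Y :=
  closure (B 0 ∪ ⋃ n, ⋃ (_ : x ∈ U n), B (n + 1))

lemma stairMap_inter_nonempty {X Y : Type*} [TopologicalSpace Y] (B : ℕ → Set Y) (U : ℕ → Set X)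
    (x : X) {V : Set Y} (hV : IsOpen V) :
    (stairMap B U x ∩ V).Nonempty ↔
      (B 0 ∩ V).Nonempty ∨ ∃ n, x ∈ U n ∧ (B (n + 1) ∩ V).Nonempty := by
  rw [stairMap, closure_inter_open_nonempty_iff hV]
  simp only [Set.Nonempty, mem_inter_iff, mem_union, mem_iUnion]
  constructor
  · rintro ⟨y, h | ⟨n, hn, h⟩, hy⟩
    · exact Or.inl ⟨y, h, hy⟩
    · exact Or.inr ⟨n, hn, y, h, hy⟩
  · rintro (⟨y, h, hy⟩ | ⟨n, hn, y, h, hy⟩)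
    · exact ⟨y, Or.inl h, hy⟩
    · exact ⟨y, Or.inr ⟨n, hn, h⟩, hy⟩

lemma stairMap_lsc {X Y : Type*} [TopologicalSpace X] [TopologicalSpace Y] {B : ℕ → Set Y}
    (hB : SICC B) {U : ℕ → Set X} (hU : ∀ n, IsOpen (U n)) : LSCMap (stairMap B U) := by
  refine ⟨fun x => ⟨?_, isClosed_closure⟩, fun V hV => ?_⟩
  · exact (hB.2.2.1.mono subset_union_left).closure
  · have : {x | (stairMap B U x ∩ V).Nonempty} =
        {_x | (B 0 ∩ V).Nonempty} ∪ ⋃ n, (U n ∩ {_x | (B (n + 1) ∩ V).Nonempty}) := by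
      ext x
      simp [stairMap_inter_nonempty B U x hV]
    rw [this]
    exact isOpen_const.union (isOpen_iUnion fun n => (hU n).inter isOpen_const)

lemma stairMap_inter_compl {X Y : Type*} [TopologicalSpace Y] {B : ℕ → Set Y}
    (hB : SICC B) {U : ℕ → Set X} (hU : Antitone U) (n : ℕ) (x : X) :
    (stairMap B U x ∩ (B n)ᶜ).Nonempty ↔ x ∈ U n := by
  have hmono : Monotone B := monotone_nat_of_le_succ fun k => (hB.2.2.2 k).subset
  rw [stairMap_inter_nonempty B U x (hB.1 n).isOpen_compl]
  constructor
  · rintro (⟨y, h, hy⟩ | ⟨m, hm, y, h, hy⟩)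
    · exact absurd (hmono (Nat.zero_le n) h) hy
    · refine hU ?_ hm
      by_contra hlt
      exact hy (hmono (by omega) h)
  · intro hx
    obtain ⟨y, h, hy⟩ := exists_of_ssubset (hB.2.2.2 n)
    exact Or.inr ⟨n, hx, y, h, hy⟩

/-- A sequence of symmetric relations with intersection the diagonal is encoded by a symmetric `d`:
`d x y` is `1 / (k + 1)` for the first `k` with `¬ R k x y`, and `0` if there is none. Hence
`d x y < r` says that `R n x y` can fail only for `n` with `1 / (n + 1) < r`. -/
lemma exists_dist_of_rel {X : Type*} (R : ℕ → X → X → Prop)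
    (hsymm : ∀ n x y, R n x y → R n y x)
    (heq : ∀ x y, (∀ n, R n x y) ↔ x = y) :
    ∃ d : X → X → ℝ, (∀ x y, 0 ≤ d x y) ∧ (∀ x y, d x y = 0 ↔ x = y) ∧ (∀ x y, d x y = d y x) ∧
      ∀ x y r, 0 < r → (d x y < r ↔ ∀ n : ℕ, r ≤ 1 / ((n : ℝ) + 1) → R n x y) := by
  classical
  have hs : ∀ n x y, R n x y ↔ R n y x := fun n x y => ⟨hsymm n x y, hsymm n y x⟩
  let d : X → X → ℝ := fun x y =>
    if h : ∃ n, ¬ R n x y then 1 / ((Nat.find h : ℝ) + 1) else 0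
  refine ⟨d, fun x y => ?_, fun x y => ?_, fun x y => ?_, fun x y r hr => ?_⟩
  · by_cases h : ∃ n, ¬ R n x y
    · simp only [d, dif_pos h]; positivity
    · simp only [d, dif_neg h]; exact le_rfl
  · by_cases h : ∃ n, ¬ R n x y
    · have hne : x ≠ y := fun e => h.elim fun n hn => hn ((heq x y).2 e n)
      have : d x y ≠ 0 := by simp only [d, dif_pos h]; positivity
      simp [hne, this]
    · have : d x y = 0 := by simp only [d, dif_neg h]
      push Not at h
      exact iff_of_true this ((heq x y).1 h)
  · simp only [d, hs _ x y]
  · by_cases h : ∃ n, ¬ R n x y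
    · have hd : d x y = 1 / ((Nat.find h : ℝ) + 1) := by simp only [d, dif_pos h]
      rw [hd]
      constructor
      · intro hlt n hn
        by_contra hR
        have hle : (Nat.find h : ℝ) ≤ n := by exact_mod_cast Nat.find_min' h hR
        have : 1 / ((n : ℝ) + 1) ≤ 1 / ((Nat.find h : ℝ) + 1) := by gcongr
        linarith
      · intro hall
        by_contra hge
        exact Nat.find_spec h (hall _ (not_lt.1 hge))
    · have hd : d x y = 0 := by simp only [d, dif_neg h]
      push Not at h
      simp [hd, hr, h]

lemma oSemiMetrizable_of_rel {X : Type*} [TopologicalSpace X] (R : ℕ → X → X → Prop)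
    (hsymm : ∀ n x y, R n x y → R n y x)
    (heq : ∀ x y, (∀ n, R n x y) ↔ x = y) (hopen : ∀ n x, IsOpen {y | R n x y})
    (hbase : ∀ x (V : Set X), IsOpen V → x ∈ V → ∃ n, {y | R n x y} ⊆ V) :
    OSemiMetrizable X := by
  obtain ⟨d, h0, hd0, hds, hd⟩ := exists_dist_of_rel R hsymm heq
  have hball : ∀ (x : X) (r : ℝ), 0 < r → IsOpen {y | d x y < r} := by
    intro x r hr
    -- Only finitely many of the conditions describing `d x y < r` are nonvacuous.
    have hfin : {n : ℕ | r ≤ 1 / ((n : ℝ) + 1)}.Finite := by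
      obtain ⟨N, hN⟩ := exists_nat_one_div_lt hr
      refine (finite_Iio N).subset fun n hn => ?_
      by_contra hle
      have hle' : (N : ℝ) ≤ n := by exact_mod_cast not_lt.1 hle
      have : 1 / ((n : ℝ) + 1) ≤ 1 / ((N : ℝ) + 1) := by gcongr
      have := mem_ofPred_eq ▸ hn
      linarith
    have : {y | d x y < r} = ⋂ n ∈ {n : ℕ | r ≤ 1 / ((n : ℝ) + 1)}, {y | R n x y} := by
      ext y
      simp only [mem_ofPred_eq, mem_iInter]
      exact hd x y r hr
    rw [this]
    exact hfin.isOpen_biInter fun n _ => hopen n x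
  refine ⟨d, ⟨h0, hd0, hds, fun x => ⟨fun V => ⟨fun hV => ?_, ?_⟩⟩⟩, hball⟩
  · obtain ⟨W, hWV, hW, hxW⟩ := mem_nhds_iff.1 hV
    obtain ⟨n, hn⟩ := hbase x W hW hxW
    have hpos : (0 : ℝ) < 1 / ((n : ℝ) + 1) := by positivity
    exact ⟨_, hpos, fun y hy => hWV (hn ((hd x y _ hpos).1 hy n le_rfl))⟩
  · rintro ⟨r, hr, hsub⟩
    exact mem_of_superset ((hball x r hr).mem_nhds (by simpa [(hd0 x x).2 rfl] using hr)) hsub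


theorem statement11 {X Y : Type*} [TopologicalSpace X] [T2Space X]
    [TopologicalSpace Y] [T2Space Y] (B : ℕ → Set Y) (hB : SICC B) :
    List.TFAE
      [OSemiMetrizable X,
       ∃ φ : Set X → X → Set Y,
        (∀ F : Set X, IsClosed F → LSCMap (φ F)) ∧
        (∀ F : Set X, IsClosed F → F = ⋂ n, {x | (φ F x ∩ (B n)ᶜ).Nonempty}) ∧
        (∀ F₁ F₂ : Set X, IsClosed F₁ → IsClosed F₂ → F₁ ⊆ F₂ →
          ∀ x, φ F₁ x ⊆ φ F₂ x) ∧
        (∀ x y : X, φ ({x} : Set X) y = φ ({y} : Set X) x),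
       ∃ φ : X → X → Set Y,
        (∀ x : X, LSCMap (φ x)) ∧
        (∀ x : X, ({x} : Set X) = ⋂ n, {y | (φ x y ∩ (B n)ᶜ).Nonempty}) ∧
        (∀ (x : X) (F : Set X), IsClosed F → x ∉ F →
          ∃ n : ℕ, F ⊆ {y | φ x y ⊆ B n}) ∧
        (∀ x y : X, φ x y = φ y x)] := by
  tfae_have 1 → 2 := by
    rintro ⟨d, ⟨h0, hd0, hds, hbasis⟩, hball⟩
    let U : Set X → ℕ → Set X := fun F n => {y | ∃ x ∈ F, d x y < 1 / ((n : ℝ) + 1)}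
    have hUo : ∀ F n, IsOpen (U F n) := by
      intro F n
      have : U F n = ⋃ x ∈ F, {y | d x y < 1 / ((n : ℝ) + 1)} := by
        ext y; simp [U]
      rw [this]
      exact isOpen_biUnion fun x _ => hball x _ (by positivity)
    have hUa : ∀ F, Antitone (U F) := by
      rintro F n m hnm y ⟨x, hx, hlt⟩
      refine ⟨x, hx, hlt.trans_le ?_⟩
      have : (n : ℝ) ≤ m := by exact_mod_cast hnm
      gcongr
    refine ⟨fun F => stairMap B (U F), fun F _ => stairMap_lsc hB (hUo F), fun F hF => ?_,
      fun F₁ F₂ _ _ hsub x => ?_, fun x y => ?_⟩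
    · ext y
      simp only [mem_iInter, mem_ofPred_eq, stairMap_inter_compl hB (hUa F)]
      constructor
      · intro hy n
        refine ⟨y, hy, ?_⟩
        rw [(hd0 y y).2 rfl]
        positivity
      · intro hall
        by_contra hy
        obtain ⟨r, hr, hsub⟩ := (hbasis y).mem_iff.1 (hF.isOpen_compl.mem_nhds hy)
        obtain ⟨n, hn⟩ := exists_nat_one_div_lt hr
        obtain ⟨x, hx, hlt⟩ := hall n
        refine hsub (show d y x < r from ?_) hx
        rw [hds]
        exact hlt.trans hn
    · refine closure_mono (union_subset_union_right _ (iUnion_mono fun n => ?_))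
      refine iUnion_subset fun hx => ?_
      obtain ⟨z, hz, hlt⟩ := hx
      exact subset_iUnion (fun _ : x ∈ U F₂ n => B (n + 1)) ⟨z, hsub hz, hlt⟩
    · have : ∀ n, (y ∈ U {x} n) = (x ∈ U {y} n) := by
        intro n
        simp [U, hds x y]
      simp only [stairMap, this]
  tfae_have 2 → 3 := by
    rintro ⟨φ, hl, hG, hm, hS⟩
    refine ⟨fun x => φ {x}, fun x => hl _ isClosed_singleton, fun x => hG _ isClosed_singleton,
      fun x F hF hx => ?_, hS⟩
    rw [hG F hF] at hx
    simp only [mem_iInter, mem_ofPred_eq, not_forall] at hx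
    obtain ⟨n, hn⟩ := hx
    refine ⟨n, fun y hy => ?_⟩
    rw [inter_compl_nonempty_iff, not_not] at hn
    change φ {x} y ⊆ B n
    rw [hS x y]
    exact (hm {y} F isClosed_singleton hF (singleton_subset_iff.2 hy) x).trans hn
  tfae_have 3 → 1 := by
    rintro ⟨φ, hl, hG, hb, hS⟩
    refine oSemiMetrizable_of_rel (fun n x y => (φ x y ∩ (B n)ᶜ).Nonempty) ?_ ?_ ?_ ?_
    · intro n x y h
      rwa [hS y x]
    · intro x y
      have := congrArg (fun s => y ∈ s) (hG x)
      simp only [mem_singleton_iff, mem_iInter, mem_ofPred_eq] at this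
      rw [← this, eq_comm]
    · exact fun n x => (hl x).2 _ (hB.1 n).isOpen_compl
    · intro x V hV hx
      obtain ⟨n, hn⟩ := hb x Vᶜ hV.isClosed_compl (fun h => h hx)
      refine ⟨n, fun y hy => ?_⟩
      by_contra hyV
      exact inter_compl_nonempty_iff.1 hy (hn hyV)
  tfae_finish
end

section
/- Let Y be a Hausdorff space with a strictly increasing closed cover {B_n}_{n∈ℕ}, and let X be a Hausdorff space. The following are equivalent: (a) X is ultrametrizable; (b) to each closed set F ⊆ X one can assign a lower semi-continuous set-valued map φ_F : X → F(Y) satisfying (G) F = ⋂_{n∈ℕ} φ_F^{-1}[Y∖B_n] for every closed F, (m) F₁ ⊆ F₂ implies φ_{F₁}(x) ⊆ φ_{F₂}(x) for every x, (S) φ_{{x}}(y) = φ_{{y}}(x) for all x, y ∈ X, and (E) for all x, y, z ∈ X, φ_{{x}}(y) ⊆ φ_{{x}}(z) or φ_{{y}}(z) ⊆ φ_{{x}}(z); (c) to each point x ∈ X one can assign a lower semi-continuous set-valued map φ_x : X → F(Y) satisfying (G) {x} = ⋂_{n∈ℕ} φ_x^{-1}[Y∖B_n] for every x, (b_S) for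 every x and every closed F with x ∉ F there exists n ∈ ℕ with F ⊆ φ_x^#[B_n], (S) φ_x(y) = φ_y(x) for all x, y ∈ X, and (E) for all x, y, z ∈ X, φ_x(y) ⊆ φ_x(z) or φ_y(z) ⊆ φ_x(z). -/
/-!
A nested family of sets `B n` turns a set `A` into a number `size B A`, namely `1 / (n + 1)` for the
least `n` with `A ⊆ B n`, and `0` if there is no such `n`. This number is antitone in `A`, so for a
family `φ` as in the third condition, `size B (φ x y)` is symmetric and condition (E) gives the
strong triangle inequality. Lower semi-continuity makes its balls open (`size_lt_iff`), and the
separation of points from closed sets makes them a neighbourhood basis.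

Conversely, an ultrametric `d` gives `φ F x = ⋃ B n` over those `n` for which `n = 0` or `x` is at
distance less than `1 / (n + 1)` from some point of `F` (`layers`). For `x ∈ F` this is all of `Y`,
and for `x ∉ F` the union is contained in a single `B k`. Passing from closed sets to points uses
`F = {x}`: by symmetry and monotonicity `φ {x} y = φ {y} x ⊆ φ F x` for `y ∈ F`, and the last set
lies in some `B n` when `x ∉ F`.
-/

open Set Filter Topology TopologicalSpace

/-- `X` is ultrametrizable. -/
def Ultrametrizable (X : Type*) [TopologicalSpace X] : Prop :=
  ∃ d : X → X → ℝ,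
    (∀ x y, 0 ≤ d x y) ∧ (∀ x y, d x y = 0 ↔ x = y) ∧ (∀ x y, d x y = d y x) ∧
    (∀ x y z, d x z ≤ max (d x y) (d y z)) ∧
    ∀ x : X, (𝓝 x).HasBasis (fun r : ℝ => 0 < r) fun r => {y | d x y < r}

/-- The reciprocal `1 / (n + 1)` of the least index `n` with `A ⊆ B n`, and `0` if `A` lies in
no `B n`. -/
noncomputable def size {Y : Type*} (B : ℕ → Set Y) (A : Set Y) : ℝ :=
  open Classical in if h : ∃ n, A ⊆ B n then 1 / ((Nat.find h : ℝ) + 1) else 0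

lemma size_nonneg {Y : Type*} (B : ℕ → Set Y) (A : Set Y) : 0 ≤ size B A := by
  unfold size
  split_ifs <;> positivity

lemma size_eq_zero_iff {Y : Type*} (B : ℕ → Set Y) (A : Set Y) :
    size B A = 0 ↔ ∀ n, ¬ A ⊆ B n := by
  classical
  unfold size
  split_ifs with h
  · have : (1 : ℝ) / ((Nat.find h : ℝ) + 1) ≠ 0 := by positivity
    exact iff_of_false this (by push Not; exact h)
  · simpa using h

lemma size_lt_iff {Y : Type*} {B : ℕ → Set Y} (hB : Monotone B) (A : Set Y) (k : ℕ) :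
    size B A < 1 / ((k : ℝ) + 1) ↔ ¬ A ⊆ B k := by
  classical
  unfold size
  split_ifs with h
  · rw [one_div_lt_one_div (by positivity) (by positivity), add_lt_add_iff_right, Nat.cast_lt,
      Nat.lt_find_iff]
    exact ⟨fun H => H k le_rfl, fun H m hm hA => H (hA.trans (hB hm))⟩
  · exact ⟨fun _ hA => h ⟨k, hA⟩, fun _ => by positivity⟩

lemma size_anti {Y : Type*} {B : ℕ → Set Y} {A C : Set Y} (hAC : A ⊆ C) :
    size B C ≤ size B A := by
  classical
  by_cases hC : ∃ n, C ⊆ B n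
  · have hA : ∃ n, A ⊆ B n := hC.imp fun n hn => hAC.trans hn
    have hle : Nat.find hA ≤ Nat.find hC := Nat.find_min' hA (hAC.trans (Nat.find_spec hC))
    simp only [size, hC, hA, dif_pos]
    gcongr
  · rw [(size_eq_zero_iff B C).2 (by simpa using hC)]
    exact size_nonneg B A

/-- The union of `B 0` and of those `B n` for which `x` has `d`-distance less than `1 / (n + 1)` to
some point of `F`. Including `B 0` unconditionally keeps the union nonempty. -/
def layers {X Y : Type*} (d : X → X → ℝ) (B : ℕ → Set Y) (F : Set X) (x : X) : Set Y :=
  {y | ∃ n : ℕ, (n = 0 ∨ ∃ a ∈ F, d a x < 1 / ((n : ℝ) + 1)) ∧ y ∈ B n}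

lemma layers_mono {X Y : Type*} {d : X → X → ℝ} {B : ℕ → Set Y} {F G : Set X} {x z : X}
    (h : ∀ a ∈ F, ∃ b ∈ G, d b z ≤ d a x) : layers d B F x ⊆ layers d B G z := by
  rintro y ⟨n, hn, hy⟩
  refine ⟨n, hn.imp_right ?_, hy⟩
  rintro ⟨a, ha, hax⟩
  obtain ⟨b, hb, hba⟩ := h a ha
  exact ⟨b, hb, hba.trans_lt hax⟩

lemma layers_of_mem {X Y : Type*} {d : X → X → ℝ} {B : ℕ → Set Y} {F : Set X} {x : X}
    (hd : d x x = 0) (hB : (⋃ n, B n) = Set.univ) (hx : x ∈ F) : layers d B F x = Set.univ := by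
  refine Set.eq_univ_of_forall fun y => ?_
  obtain ⟨n, hn⟩ := Set.mem_iUnion.1 (hB ▸ Set.mem_univ y)
  exact ⟨n, Or.inr ⟨x, hx, by rw [hd]; positivity⟩, hn⟩

/-- A point off the closed set `F` has positive distance to it, so only finitely many layers
occur. -/
lemma layer_index_bounded {X : Type*} [TopologicalSpace X] {d : X → X → ℝ}
    {F : Set X} {x : X} (hF : IsClosed F) (hx : x ∉ F) (hs : ∀ x y, d x y = d y x)
    (hb : (𝓝 x).HasBasis (fun r : ℝ => 0 < r) fun r => {y | d x y < r}) :
    ∃ k : ℕ, ∀ n : ℕ, (n = 0 ∨ ∃ a ∈ F, d a x < 1 / ((n : ℝ) + 1)) → n ≤ k := by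
  obtain ⟨r, hr, hrF⟩ := hb.mem_iff.1 (hF.isOpen_compl.mem_nhds hx)
  obtain ⟨k, hk⟩ := exists_nat_one_div_lt hr
  refine ⟨k, ?_⟩
  rintro n (rfl | ⟨a, ha, hax⟩)
  · exact Nat.zero_le k
  · by_contra! hkn
    refine hrF ?_ ha
    have h1 : (1 : ℝ) / ((n : ℝ) + 1) ≤ 1 / ((k : ℝ) + 1) := by gcongr
    change d x a < r
    rw [hs]
    linarith

lemma layers_lsc {X Y : Type*} [TopologicalSpace X] [TopologicalSpace Y] {d : X → X → ℝ}
    {B : ℕ → Set Y} {F : Set X} (hB : SICC B) (hF : IsClosed F) (h0 : ∀ x, d x x = 0)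
    (hs : ∀ x y, d x y = d y x) (ht : ∀ x y z, d x z ≤ max (d x y) (d y z))
    (hb : ∀ x : X, (𝓝 x).HasBasis (fun r : ℝ => 0 < r) fun r => {y | d x y < r}) :
    LSCMap (layers d B F) := by
  obtain ⟨hcl, hun, hne, -⟩ := hB
  refine ⟨fun x => ⟨hne.mono fun y hy => ⟨0, Or.inl rfl, hy⟩, ?_⟩, fun V hV => ?_⟩
  · by_cases hx : x ∈ F
    · rw [layers_of_mem (h0 x) hun hx]
      exact isClosed_univ
    · obtain ⟨k, hk⟩ := layer_index_bounded hF hx hs (hb x)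
      have hfin : {n : ℕ | n = 0 ∨ ∃ a ∈ F, d a x < 1 / ((n : ℝ) + 1)}.Finite :=
        (Set.finite_Iic k).subset hk
      have := hfin.isClosed_biUnion fun n _ => hcl n
      convert this using 1
      ext y
      simp only [layers, Set.mem_iUnion, Set.mem_ofPred_eq, exists_prop]
  · rw [isOpen_iff_mem_nhds]
    rintro x ⟨y, ⟨n, hn, hyn⟩, hyV⟩
    -- By the ultrametric inequality, moving `x` by less than `1 / (n + 1)` keeps the index `n`.
    have hpos : (0 : ℝ) < 1 / ((n : ℝ) + 1) := by positivity
    filter_upwards [(hb x).mem_of_mem hpos] with z hz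
    refine ⟨y, ⟨n, hn.imp_right ?_, hyn⟩, hyV⟩
    rintro ⟨a, ha, hax⟩
    exact ⟨a, ha, (ht a x z).trans_lt (max_lt hax hz)⟩

theorem statement12 {X Y : Type*} [TopologicalSpace X] [T2Space X]
    [TopologicalSpace Y] [T2Space Y] (B : ℕ → Set Y) (hB : SICC B) :
    List.TFAE
      [Ultrametrizable X,
       ∃ φ : Set X → X → Set Y,
        (∀ F : Set X, IsClosed F → LSCMap (φ F)) ∧
        (∀ F : Set X, IsClosed F → F = ⋂ n, {x | (φ F x ∩ (B n)ᶜ).Nonempty}) ∧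
        (∀ F₁ F₂ : Set X, IsClosed F₁ → IsClosed F₂ → F₁ ⊆ F₂ →
          ∀ x, φ F₁ x ⊆ φ F₂ x) ∧
        (∀ x y : X, φ ({x} : Set X) y = φ ({y} : Set X) x) ∧
        (∀ x y z : X,
          φ ({x} : Set X) y ⊆ φ ({x} : Set X) z ∨
            φ ({y} : Set X) z ⊆ φ ({x} : Set X) z),
       ∃ φ : X → X → Set Y,
        (∀ x : X, LSCMap (φ x)) ∧
        (∀ x : X, ({x} : Set X) = ⋂ n, {y | (φ x y ∩ (B n)ᶜ).Nonempty}) ∧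
        (∀ (x : X) (F : Set X), IsClosed F → x ∉ F →
          ∃ n : ℕ, F ⊆ {y | φ x y ⊆ B n}) ∧
        (∀ x y : X, φ x y = φ y x) ∧
        (∀ x y z : X, φ x y ⊆ φ x z ∨ φ y z ⊆ φ x z)] := by
  have hmono : Monotone B := monotone_nat_of_le_succ fun n => (hB.2.2.2 n).subset
  tfae_have 1 → 2 := by
    rintro ⟨d, -, hz, hs, ht, hb⟩
    have h0 : ∀ x, d x x = 0 := fun x => (hz x x).2 rfl
    refine ⟨layers d B, fun F hF => layers_lsc hB hF h0 hs ht hb, fun F hF => ?_,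
      fun F₁ F₂ _ _ h x => layers_mono fun a ha => ⟨a, h ha, le_rfl⟩, fun x y => ?_,
      fun x y z => ?_⟩
    · ext x
      simp only [Set.mem_iInter, Set.mem_ofPred_eq, Set.inter_compl_nonempty_iff]
      constructor
      · intro hx n hn
        rw [layers_of_mem (h0 x) hB.2.1 hx] at hn
        exact (hB.2.2.2 n).2 ((Set.subset_univ _).trans hn)
      · intro H
        by_contra hx
        obtain ⟨k, hk⟩ := layer_index_bounded hF hx hs (hb x)
        refine H k ?_
        rintro y ⟨n, hn, hy⟩
        exact hmono (hk n hn) hy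
    · exact Set.Subset.antisymm (layers_mono (by simp [hs x y])) (layers_mono (by simp [hs x y]))
    · rcases le_max_iff.1 (ht x y z) with h | h
      · exact Or.inl (layers_mono (by simpa using h))
      · exact Or.inr (layers_mono (by simpa using h))
  tfae_have 2 → 3 := by
    rintro ⟨φ, hl, hG, hm, hs, hE⟩
    refine ⟨fun x => φ {x}, fun x => hl _ isClosed_singleton, fun x => hG _ isClosed_singleton,
      fun x F hF hx => ?_, hs, hE⟩
    rw [hG F hF] at hx
    simp only [Set.mem_iInter, Set.mem_ofPred_eq, Set.inter_compl_nonempty_iff, not_forall,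
      not_not] at hx
    obtain ⟨n, hn⟩ := hx
    refine ⟨n, fun y hy => ?_⟩
    change φ {x} y ⊆ B n
    rw [hs]
    exact (hm _ _ isClosed_singleton hF (Set.singleton_subset_iff.2 hy) x).trans hn
  tfae_have 3 → 1 := by
    rintro ⟨φ, hl, hG, hbS, hs, hE⟩
    have hG' : ∀ x y, y = x ↔ ∀ n, ¬ φ x y ⊆ B n := fun x y => by
      have := Set.ext_iff.1 (hG x) y
      simpa only [Set.mem_singleton_iff, Set.mem_iInter, Set.mem_ofPred_eq,
        Set.inter_compl_nonempty_iff] using this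
    refine ⟨fun x y => size B (φ x y), fun x y => size_nonneg _ _, fun x y => ?_,
      fun x y => congrArg (size B) (hs x y), fun x y z => ?_, fun x => ⟨fun U => ?_⟩⟩
    · rw [size_eq_zero_iff, ← hG', eq_comm]
    · exact le_max_iff.2 ((hE x y z).imp size_anti size_anti)
    · constructor
      · intro hU
        obtain ⟨V, hVU, hV, hxV⟩ := mem_nhds_iff.1 hU
        obtain ⟨n, hn⟩ := hbS x Vᶜ hV.isClosed_compl (by simpa using hxV)
        refine ⟨1 / ((n : ℝ) + 1), by positivity, fun y hy => hVU ?_⟩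
        by_contra hyV
        exact (size_lt_iff hmono _ n).1 hy (hn hyV)
      · rintro ⟨r, hr, hrU⟩
        obtain ⟨k, hk⟩ := exists_nat_one_div_lt hr
        have hop := (hl x).2 (B k)ᶜ (hB.1 k).isOpen_compl
        refine Filter.mem_of_superset (hop.mem_nhds ?_) fun y hy => hrU ?_
        · exact Set.inter_compl_nonempty_iff.2 ((hG' x x).1 rfl k)
        · exact ((size_lt_iff hmono _ k).2 (Set.inter_compl_nonempty_iff.1 hy)).trans hk
  tfae_finish
end

section
/- Let Y be a Hausdorff space with a strictly increasing closed cover {B_n}_{n∈ℕ}. A Hausdorff space X is strongly quasi-metrizable if and only if to each closed set F ⊆ X one can assign a lower semi-continuous set-valued map φ_F : X → F(Y) such that: (G) for every closed F, F = ⋂_{n∈ℕ} φ_F^{-1}[Y∖B_n]; (m) if F₁ ⊆ F₂ are closed, then φ_{F₁}(x) ⊆ φ_{F₂}(x) for every x ∈ X; and (b_C) for every compact K ⊆ X and every closed F ⊆ X with K ∩ F = ∅, there exists n ∈ ℕ with F ⊆ φ_K^#[B_n], where φ_K is the map assigned to the closed set K. -/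
/-!
Write `U n F = {x | φ F x ⊄ B n}`. A family `φ` as in the theorem is the same thing as a decreasing
sequence of open sets `U n F ⊇ F`, monotone in `F`, with `⋂ n, U n F = F` for closed `F` and such
that `U n K` is eventually inside any given neighbourhood of a compact set `K`.

*From a strong quasi-metric `d` to `φ`.* Take `U n F = {y | ∃ z ∈ F, d z y < 1 / (n + 1)}` and let
`φ F x` be the union of `B 0` and of all `B (n + 1)` with `x ∈ U n F`. The identity `⋂ n, U n F = F`
is the strongness of `d`, and the condition on compact sets is a Lebesgue number argument.

*From `φ` to a strong quasi-metric.* Put `g n x = U n {x}`. If `x ∈ g n y` with `n` large then `y` is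
near `x` (semi-stratifiability), and `y n → x`, `a n ∈ g n (y n)` force `a n → x` (the γ-space
property, from the compact sets `{x} ∪ {y n | n ≥ N}`). Hence for each `k` the sets
`⋃ {(g n)^k (y) | x ∈ g n y}` shrink to `x` (`exists_chain_subset`).

The heart is `exists_refinement`: for each neighbourhood assignment `V` there is a neighbourhood
assignment `W` with `W^6 ⊆ V^2`. With `A n = {x | x ∈ g n y → (g n)^6 (y) ⊆ V x}`, the `A n` increase
to `X`; let `w x` be the least `n` with `x ∈ closure (A n)`. The function `w` is lower
semicontinuous, so `W x = g (w x) x ∩ {y | w x ≤ w y}` is a neighbourhood of `x`, and along a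
`W`-chain starting at `x` every step is a `g (w x)`-step. As `x` is in the closure of `A (w x)`, some
point `x' ∈ A (w x) ∩ V x ∩ g (w x) x` satisfies `(g (w x))^6 (x) ⊆ V x' ⊆ V^2 (x)`.

Iterating gives `V n` with `(V (n + 1))^6 ⊆ (V n)^2`, so `E n = (V n)^2` satisfies
`E (n + 1)^3 ⊆ E n`, and the usual chain infimum is a compatible quasi-metric
(`stronglyQuasiMetrizable_of_normal`). To have it strong, `E n y x` must force `y` to be near `x`;
this needs `g` to be shrunk beforehand (`exists_shrinking`) so that already `x ∈ (g n)^2 (y)` forces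
`y` to be near `x`.
-/

open Set Filter Topology TopologicalSpace

/-- `X` is strongly quasi-metrizable. -/
def StronglyQuasiMetrizable (X : Type*) [t : TopologicalSpace X] : Prop :=
  ∃ d : X → X → ℝ,
    (∀ x y, 0 ≤ d x y) ∧ (∀ x y, d x y = 0 ↔ x = y) ∧
    (∀ x y z, d x z ≤ d x y + d y z) ∧
    (TopologicalSpace.generateFrom {s : Set X | ∃ (x : X) (r : ℝ), 0 < r ∧ s = {y | d y x < r}} ≤
      TopologicalSpace.generateFrom {s : Set X | ∃ (x : X) (r : ℝ), 0 < r ∧ s = {y | d x y < r}}) ∧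
    t = TopologicalSpace.generateFrom {s : Set X | ∃ (x : X) (r : ℝ), 0 < r ∧ s = {y | d x y < r}}

namespace QM

/-! ### Quasi-metrics from normal sequences of relations -/

/-- `Path E l x y`: there is a path from `x` to `y` whose successive steps are in the relations
`E n`, for `n` running through the list `l`. -/
def Path {X : Type*} (E : ℕ → X → X → Prop) : List ℕ → X → X → Prop
  | [], x, y => x = y
  | n :: l, x, y => ∃ z, E n x z ∧ Path E l z y

/-- The length of a path, a step in `E n` counting for `2⁻ⁿ`. -/
noncomputable def wt (l : List ℕ) : ℝ := (l.map fun n => ((1 : ℝ) / 2) ^ n).sum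

lemma wt_nil : wt [] = 0 := by simp [wt]

lemma wt_cons (n : ℕ) (l : List ℕ) : wt (n :: l) = (1 / 2) ^ n + wt l := by simp [wt]

lemma wt_append (l l' : List ℕ) : wt (l ++ l') = wt l + wt l' := by simp [wt]

lemma wt_nonneg (l : List ℕ) : 0 ≤ wt l := by
  induction l with
  | nil => simp [wt_nil]
  | cons n l ih => rw [wt_cons]; positivity

lemma path_append {X : Type*} {E : ℕ → X → X → Prop} {l l' : List ℕ} {x z : X} :
    Path E (l ++ l') x z ↔ ∃ y, Path E l x y ∧ Path E l' y z := by
  induction l generalizing x with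
  | nil => simp [Path]
  | cons n l ih =>
    simp only [List.cons_append, Path, ih]
    constructor
    · rintro ⟨u, hu, y, h1, h2⟩
      exact ⟨y, ⟨u, hu, h1⟩, h2⟩
    · rintro ⟨y, ⟨u, hu, h1⟩, h2⟩
      exact ⟨u, hu, y, h1, h2⟩

lemma exists_split (l : List ℕ) (hl : l ≠ []) (a b : ℝ) (ha : 0 < a) (hb : 0 < b)
    (h : wt l < a + b) : ∃ l₁ n l₂, l = l₁ ++ n :: l₂ ∧ wt l₁ < a ∧ wt l₂ < b := by
  induction l generalizing a with
  | nil => exact absurd rfl hl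
  | cons n l ih =>
    by_cases hlb : wt l < b
    · exact ⟨[], n, l, rfl, by simpa [wt_nil] using ha, hlb⟩
    · rw [wt_cons] at h
      push Not at hlb
      have hne : l ≠ [] := by
        rintro rfl
        rw [wt_nil] at hlb
        linarith
      obtain ⟨l₁, m, l₂, rfl, h1, h2⟩ := ih hne (a - (1 / 2) ^ n) (by linarith) (by linarith)
      exact ⟨n :: l₁, m, l₂, rfl, by rw [wt_cons]; linarith, h2⟩

/-- A path of length less than `2⁻ᴺ` stays in `E N`: cut it into a single step and two paths of
length less than `2⁻ᴺ⁻¹`. -/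
lemma path_short {X : Type*} {E : ℕ → X → X → Prop} (hrefl : ∀ n x, E n x x)
    (hcomp : ∀ n x a b y, E (n + 1) x a → E (n + 1) a b → E (n + 1) b y → E n x y)
    (k : ℕ) : ∀ (l : List ℕ) (N : ℕ) (x y : X), l.length ≤ k → wt l < (1 / 2) ^ N →
      Path E l x y → E N x y := by
  have hanti : ∀ m n, m ≤ n → ∀ x y, E n x y → E m x y := by
    intro m n hmn
    induction hmn with
    | refl => exact fun _ _ h => h
    | step _ ih => exact fun x y h => ih x y (hcomp _ x x x y (hrefl _ _) (hrefl _ _) h)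
  induction k with
  | zero =>
    intro l N x y hl _ hp
    obtain rfl : l = [] := List.length_eq_zero_iff.1 (by omega)
    obtain rfl : x = y := hp
    exact hrefl _ _
  | succ k ih =>
    intro l N x y hl hw hp
    by_cases hne : l = []
    · subst hne
      obtain rfl : x = y := hp
      exact hrefl _ _
    obtain ⟨l₁, n, l₂, rfl, h1, h2⟩ := exists_split l hne ((1 / 2) ^ (N + 1)) ((1 / 2) ^ (N + 1))
      (by positivity) (by positivity) (by rw [pow_succ]; linarith)
    simp only [List.length_append, List.length_cons] at hl
    rw [wt_append, wt_cons] at hw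
    have hn : N < n := by
      have : ((1 : ℝ) / 2) ^ n < (1 / 2) ^ N := by
        linarith [wt_nonneg l₁, wt_nonneg l₂]
      exact (pow_lt_pow_iff_right_of_lt_one₀ (by norm_num) (by norm_num)).1 this
    obtain ⟨a, hxa, b, hab, hby⟩ := path_append.1 hp
    exact hcomp N x a b y (ih l₁ _ _ _ (by omega) h1 hxa) (hanti _ _ hn _ _ hab)
      (ih l₂ _ _ _ (by omega) h2 hby)

/-- The chain infimum of the lengths of all paths from `x` to `y`. -/
noncomputable def qd {X : Type*} (E : ℕ → X → X → Prop) (x y : X) : ℝ :=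
  sInf (wt '' {l | Path E l x y})

lemma qd_le {X : Type*} {E : ℕ → X → X → Prop} {l : List ℕ} {x y : X} (h : Path E l x y) :
    qd E x y ≤ wt l :=
  csInf_le ⟨0, by rintro _ ⟨l, -, rfl⟩; exact wt_nonneg l⟩ ⟨l, h, rfl⟩

/-- A sequence of relations `E n` with `E (n + 1)^3 ⊆ E n`, whose sections `{y | E n x y}` form a
neighbourhood base at `x` and whose cosections `{y | E n y x}` shrink to `x`, comes from a strong
quasi-metric. -/
lemma stronglyQuasiMetrizable_of_normal {X : Type*} [t : TopologicalSpace X] [T2Space X]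
    (E : ℕ → X → X → Prop) (hE0 : ∀ x y, E 0 x y) (hrefl : ∀ n x, E n x x)
    (hcomp : ∀ n x a b y, E (n + 1) x a → E (n + 1) a b → E (n + 1) b y → E n x y)
    (hnhds : ∀ n x, {y | E n x y} ∈ 𝓝 x)
    (hbase : ∀ x, ∀ O : Set X, IsOpen O → x ∈ O → ∃ n, ∀ y, E n x y → y ∈ O)
    (hstrong : ∀ x, ∀ O : Set X, IsOpen O → x ∈ O → ∃ n, ∀ y, E n y x → y ∈ O) :
    StronglyQuasiMetrizable X := by
  -- The hypothesis that `E 0` is everything makes the infimum one over a nonempty set.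
  have hne : ∀ x y, (wt '' {l | Path E l x y}).Nonempty := fun x y =>
    ⟨_, [0], ⟨y, hE0 x y, rfl⟩, rfl⟩
  have hlt : ∀ x y r, qd E x y < r → ∃ l, Path E l x y ∧ wt l < r := by
    intro x y r h
    obtain ⟨_, ⟨l, hl, rfl⟩, h'⟩ := exists_lt_of_csInf_lt (hne x y) h
    exact ⟨l, hl, h'⟩
  have hsmall : ∀ N x y, qd E x y < (1 / 2) ^ N → E N x y := by
    intro N x y h
    obtain ⟨l, hl, h'⟩ := hlt x y _ h
    exact path_short hrefl hcomp l.length l N x y le_rfl h' hl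
  have hnn : ∀ x y, 0 ≤ qd E x y := fun x y =>
    le_csInf (hne x y) (by rintro _ ⟨l, -, rfl⟩; exact wt_nonneg l)
  have hself : ∀ x, qd E x x = 0 := fun x =>
    le_antisymm (by simpa [wt_nil] using qd_le (E := E) (l := []) (x := x) (y := x) rfl) (hnn x x)
  have htri : ∀ x y z, qd E x z ≤ qd E x y + qd E y z := by
    intro x y z
    refine le_of_forall_pos_le_add fun ε hε => ?_
    obtain ⟨l, hl, h1⟩ := hlt x y (qd E x y + ε / 2) (by linarith)
    obtain ⟨l', hl', h2⟩ := hlt y z (qd E y z + ε / 2) (by linarith)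
    have := qd_le (path_append.2 ⟨y, hl, hl'⟩)
    rw [wt_append] at this
    linarith
  have hpow : ∀ N : ℕ, (0 : ℝ) < (1 / 2) ^ N := fun N => by positivity
  have htop : t = TopologicalSpace.generateFrom
      {s : Set X | ∃ (x : X) (r : ℝ), 0 < r ∧ s = {y | qd E x y < r}} := by
    apply le_antisymm
    · apply le_generateFrom
      rintro _ ⟨x, r, -, rfl⟩
      rw [isOpen_iff_mem_nhds]
      intro y hy
      have hy' : qd E x y < r := hy
      obtain ⟨n, hn⟩ := exists_pow_lt_of_lt_one (sub_pos.2 hy') (by norm_num : (1 / 2 : ℝ) < 1)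
      filter_upwards [hnhds n y] with z hz
      have h1 : qd E y z ≤ wt [n] := qd_le ⟨z, hz, rfl⟩
      rw [wt_cons, wt_nil] at h1
      have h2 := htri x y z
      change qd E x z < r
      linarith
    · intro O hO
      refine (@isOpen_iff_forall_mem_open X (generateFrom _) O).2 fun x hx => ?_
      obtain ⟨N, hN⟩ := hbase x O hO hx
      refine ⟨{y | qd E x y < (1 / 2) ^ N}, fun y hy => hN y (hsmall N x y hy),
        isOpen_generateFrom_of_mem ⟨x, _, hpow N, rfl⟩, ?_⟩
      change qd E x x < _
      rw [hself]
      exact hpow N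
  refine ⟨qd E, hnn, fun x y => ⟨fun h => ?_, ?_⟩, htri, ?_, htop⟩
  · by_contra hxy
    obtain ⟨N, hN⟩ := hbase x {y}ᶜ isOpen_compl_singleton hxy
    exact hN y (hsmall N x y (by rw [h]; exact hpow N)) rfl
  · rintro rfl
    exact hself x
  · rw [← htop]
    intro O hO
    refine (@isOpen_iff_forall_mem_open X (generateFrom _) O).2 fun x hx => ?_
    obtain ⟨N, hN⟩ := hstrong x O hO hx
    refine ⟨{y | qd E y x < (1 / 2) ^ N}, fun y hy => hN y (hsmall N y x hy),
      isOpen_generateFrom_of_mem ⟨x, _, hpow N, rfl⟩, ?_⟩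
    change qd E x x < _
    rw [hself]
    exact hpow N

/-! ### Chains of a neighbourhood assignment -/

/-- `chain g k x` is the set of end points of `k`-step chains `x = x₀, x₁, …, x_k` with
`x_{i+1} ∈ g x_i`. -/
def chain {X : Type*} (g : X → Set X) : ℕ → X → Set X
  | 0, x => {x}
  | k + 1, x => {z | ∃ y ∈ chain g k x, z ∈ g y}

lemma chain_add {X : Type*} {g : X → Set X} {j k : ℕ} {x y z : X} (hy : y ∈ chain g j x)
    (hz : z ∈ chain g k y) : z ∈ chain g (j + k) x := by
  induction k generalizing z with
  | zero =>
    obtain rfl : z = y := hz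
    exact hy
  | succ k ih =>
    obtain ⟨u, hu, hzu⟩ := hz
    exact ⟨u, ih hu, hzu⟩

lemma chain_mono {X : Type*} {g h : X → Set X} (hgh : ∀ x, g x ⊆ h x) (k : ℕ) (x : X) :
    chain g k x ⊆ chain h k x := by
  induction k with
  | zero => exact Subset.rfl
  | succ k ih =>
    rintro z ⟨y, hy, hz⟩
    exact ⟨y, ih hy, hgh y hz⟩

lemma mem_chain_two {X : Type*} {g : X → Set X} {x y z : X} (hy : y ∈ g x) (hz : z ∈ g y) :
    z ∈ chain g 2 x :=
  ⟨y, ⟨x, rfl, hy⟩, hz⟩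

lemma chain_two {X : Type*} {g : X → Set X} {x z : X} (h : z ∈ chain g 2 x) :
    ∃ y ∈ g x, z ∈ g y := by
  obtain ⟨y, ⟨u, hu, hy⟩, hz⟩ := h
  obtain rfl : u = x := hu
  exact ⟨y, hy, hz⟩

/-! ### Semi-stratifiable γ-spaces -/

/-- A decreasing sequence of assignments of open neighbourhoods such that, for each `k`, the sets
`⋃ {chain (g n) k y | x ∈ g n y}` shrink to `x`. -/
structure Good {X : Type*} [TopologicalSpace X] (g : ℕ → X → Set X) : Prop where
  isOpen : ∀ n x, IsOpen (g n x)
  self : ∀ n x, x ∈ g n x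
  anti : ∀ m n, m ≤ n → ∀ x, g n x ⊆ g m x
  small : ∀ k x, ∀ O : Set X, IsOpen O → x ∈ O →
    ∃ n, ∀ y, x ∈ g n y → chain (g n) k y ⊆ O

/-- Semi-stratifiability (`semi`) together with the γ-space property (`gamma`) gives `Good`. -/
lemma exists_chain_subset {X : Type*} [TopologicalSpace X] {g : ℕ → X → Set X}
    (hopen : ∀ n x, IsOpen (g n x)) (hself : ∀ n x, x ∈ g n x)
    (hanti : ∀ m n, m ≤ n → ∀ x, g n x ⊆ g m x)
    (semi : ∀ x, ∀ O : Set X, IsOpen O → x ∈ O → ∃ n, ∀ y, x ∈ g n y → y ∈ O)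
    (gamma : ∀ x, ∀ y a : ℕ → X, Tendsto y atTop (𝓝 x) → (∀ n, a n ∈ g n (y n)) →
      Tendsto a atTop (𝓝 x)) : Good g := by
  refine ⟨hopen, hself, hanti, fun k x O hO hx => ?_⟩
  by_contra! hcon
  choose y hy hn using hcon
  simp only [Set.not_subset] at hn
  choose a ha haO using hn
  have hyx : Tendsto y atTop (𝓝 x) := by
    rw [tendsto_nhds]
    intro O' hO' hx'
    obtain ⟨N, hN⟩ := semi x O' hO' hx'
    filter_upwards [eventually_ge_atTop N] with n hn
    exact hN _ (hanti N n hn _ (hy n))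
  have key : ∀ k, ∀ a : ℕ → X, (∀ n, a n ∈ chain (g n) k (y n)) → Tendsto a atTop (𝓝 x) := by
    intro k
    induction k with
    | zero =>
      intro a ha
      obtain rfl : a = y := funext fun n => ha n
      exact hyx
    | succ k ih =>
      intro a ha
      choose b hb hab using ha
      exact gamma x b a (ih b hb) hab
  obtain ⟨n, hn⟩ := ((key k a ha).eventually (hO.mem_nhds hx)).exists
  exact haO n hn

/-- A good sequence can be shrunk so that `x ∈ (h n)^2 (z)` forces `z` to be near `x`. The closures
of `A p i = {x | x ∈ g i y → y ∈ g p x}` serve as a countable family of closed sets which `h n y`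
avoids, for small `p` and `i`, unless `y` belongs to them. -/
lemma exists_shrinking {X : Type*} [TopologicalSpace X] {g : ℕ → X → Set X} (hg : Good g) :
    ∃ h : ℕ → X → Set X, Good h ∧
      ∀ x, ∀ O : Set X, IsOpen O → x ∈ O → ∃ n, ∀ z, x ∈ chain (h n) 2 z → z ∈ O := by
  let A : ℕ → ℕ → Set X := fun p i => {x | ∀ y, x ∈ g i y → y ∈ g p x}
  let h : ℕ → X → Set X := fun n y =>
    g n y ∩ ⋂ p ∈ Set.Iic n, ⋂ i ∈ Set.Iic n, {z | z ∈ closure (A p i) → y ∈ closure (A p i)}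
  have hmem : ∀ n y z, z ∈ h n y ↔ z ∈ g n y ∧ ∀ p ≤ n, ∀ i ≤ n,
      z ∈ closure (A p i) → y ∈ closure (A p i) := by
    intro n y z
    simp [h]
  have hsub : ∀ n y, h n y ⊆ g n y := fun n y => inter_subset_left
  refine ⟨h, ⟨?_, ?_, ?_, ?_⟩, ?_⟩
  · intro n y
    refine (hg.isOpen n y).inter ((finite_Iic n).isOpen_biInter fun p _ =>
      (finite_Iic n).isOpen_biInter fun i _ => ?_)
    by_cases hy : y ∈ closure (A p i)
    · simp [hy]
    · simp only [hy, imp_false]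
      exact isClosed_closure.isOpen_compl
  · intro n x
    exact (hmem n x x).2 ⟨hg.self n x, fun _ _ _ _ h => h⟩
  · intro m n hmn x z hz
    rw [hmem] at hz ⊢
    exact ⟨hg.anti m n hmn x hz.1, fun p hp i hi => hz.2 p (hp.trans hmn) i (hi.trans hmn)⟩
  · intro k x O hO hx
    obtain ⟨n, hn⟩ := hg.small k x O hO hx
    exact ⟨n, fun y hy => (chain_mono (hsub n) k y).trans (hn y (hsub n y hy))⟩
  · intro x O hO hx
    obtain ⟨p, hp⟩ := hg.small 2 x O hO hx
    obtain ⟨i, hi⟩ := hg.small 0 x (g p x) (hg.isOpen p x) (hg.self p x)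
    have hxA : x ∈ A p i := fun y hy => hi y hy rfl
    refine ⟨max p i, fun z hz => ?_⟩
    obtain ⟨y, hyz, hxy⟩ := chain_two hz
    rw [hmem] at hxy hyz
    have hyA : y ∈ closure (A p i) :=
      hxy.2 p (le_max_left _ _) i (le_max_right _ _) (subset_closure hxA)
    -- A point of `A p i` near `y` links `z` back to `y`.
    obtain ⟨y', ⟨hy'1, hy'2⟩, hy'A⟩ := mem_closure_iff.1 hyA (g p y ∩ g i z)
      ((hg.isOpen p y).inter (hg.isOpen i z))
      ⟨hg.self p y, hg.anti i _ (le_max_right _ _) z hyz.1⟩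
    exact hp y (hg.anti p _ (le_max_left _ _) y hxy.1) (mem_chain_two hy'1 (hy'A z hy'2))

/-- The key lemma: every neighbourhood assignment `V` has a refinement `W` with `W^6 ⊆ V^2`. -/
lemma exists_refinement {X : Type*} [TopologicalSpace X] {g : ℕ → X → Set X} (hg : Good g)
    (V : X → Set X) (hV : ∀ x, IsOpen (V x) ∧ x ∈ V x) :
    ∃ W : X → Set X, (∀ x, IsOpen (W x) ∧ x ∈ W x) ∧ ∀ x, chain W 6 x ⊆ chain V 2 x := by
  classical
  let A : ℕ → Set X := fun n => {x | ∀ y, x ∈ g n y → chain (g n) 6 y ⊆ V x}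
  have hA : ∀ x, ∃ n, x ∈ closure (A n) := fun x => by
    obtain ⟨n, hn⟩ := hg.small 6 x (V x) (hV x).1 (hV x).2
    exact ⟨n, subset_closure hn⟩
  let w : X → ℕ := fun x => Nat.find (hA x)
  have hw : ∀ x, x ∈ closure (A (w x)) := fun x => Nat.find_spec (hA x)
  let W : X → Set X := fun x => g (w x) x ∩ {y | w x ≤ w y}
  have hle : ∀ m, IsOpen {y | m ≤ w y} := by
    intro m
    have : {y | m ≤ w y} = ⋂ i ∈ Set.Iio m, (closure (A i))ᶜ := by
      ext y
      simp [w, Nat.le_find_iff]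
    rw [this]
    exact (finite_Iio m).isOpen_biInter fun i _ => isClosed_closure.isOpen_compl
  refine ⟨W, fun x => ⟨(hg.isOpen _ x).inter (hle _), hg.self _ x, le_refl (w x)⟩, fun x d hd => ?_⟩
  have key : ∀ k, ∀ z ∈ chain W k x, z ∈ chain (g (w x)) k x ∧ w x ≤ w z := by
    intro k
    induction k with
    | zero =>
      intro z hz
      obtain rfl : z = x := hz
      exact ⟨rfl, le_rfl⟩
    | succ k ih =>
      rintro z ⟨y, hy, hz1, hz2⟩
      obtain ⟨h1, h2⟩ := ih y hy
      exact ⟨⟨y, h1, hg.anti _ _ h2 y hz1⟩, h2.trans hz2⟩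
  obtain ⟨x', ⟨h1, h2⟩, hx'⟩ := mem_closure_iff.1 (hw x) (V x ∩ g (w x) x)
    ((hV x).1.inter (hg.isOpen _ x)) ⟨(hV x).2, hg.self _ x⟩
  exact mem_chain_two h1 (hx' x h2 (key 6 d hd).1)

lemma Good.stronglyQuasiMetrizable {X : Type*} [TopologicalSpace X] [T2Space X]
    {g : ℕ → X → Set X} (hg : Good g) : StronglyQuasiMetrizable X := by
  obtain ⟨h, hh, hstrong⟩ := exists_shrinking hg
  have href : ∀ V : {V : X → Set X // ∀ x, IsOpen (V x) ∧ x ∈ V x},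
      ∃ W : {V : X → Set X // ∀ x, IsOpen (V x) ∧ x ∈ V x},
        ∀ x, chain W.1 6 x ⊆ chain V.1 2 x := by
    rintro ⟨V, hV⟩
    obtain ⟨W, hW, h6⟩ := exists_refinement hh V hV
    exact ⟨⟨W, hW⟩, h6⟩
  choose W hW using href
  let V : ℕ → {V : X → Set X // ∀ x, IsOpen (V x) ∧ x ∈ V x} := fun n =>
    Nat.rec ⟨h 0, fun x => ⟨hh.isOpen 0 x, hh.self 0 x⟩⟩
      (fun n V => ⟨fun x => (W V).1 x ∩ h (n + 1) x, fun x =>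
        ⟨((W V).2 x).1.inter (hh.isOpen _ x), ((W V).2 x).2, hh.self _ x⟩⟩) n
  have hVh : ∀ n x, (V n).1 x ⊆ h n x := by
    intro n x
    cases n with
    | zero => exact Subset.rfl
    | succ n => exact inter_subset_right
  have hV6 : ∀ n x, chain (V (n + 1)).1 6 x ⊆ chain (V n).1 2 x := fun n x =>
    (chain_mono (fun y => inter_subset_left) 6 x).trans (hW (V n) x)
  have hself : ∀ n x, x ∈ chain (V n).1 2 x := fun n x =>
    mem_chain_two ((V n).2 x).2 ((V n).2 x).2
  -- The index is shifted by one, to make room for the full relation at `0`.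
  let E : ℕ → X → X → Prop := fun n x y =>
    match n with
    | 0 => True
    | n + 1 => y ∈ chain (V n).1 2 x
  refine stronglyQuasiMetrizable_of_normal E (fun _ _ => trivial) ?_ ?_ ?_ ?_ ?_
  · rintro (_ | n) x
    · trivial
    · exact hself n x
  · rintro (_ | n) x a b y h1 h2 h3
    · trivial
    · exact hV6 n x (chain_add (chain_add h1 h2) h3)
  · rintro (_ | n) x
    · exact univ_mem
    · exact mem_of_superset (((V n).2 x).1.mem_nhds ((V n).2 x).2)
        fun y hy => mem_chain_two hy ((V n).2 y).2
  · intro x O hO hx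
    obtain ⟨n, hn⟩ := hh.small 2 x O hO hx
    exact ⟨n + 1, fun y hy => hn x (hh.self n x) (chain_mono (hVh n) 2 x hy)⟩
  · intro x O hO hx
    obtain ⟨n, hn⟩ := hstrong x O hO hx
    exact ⟨n + 1, fun y hy => hn y (chain_mono (hVh n) 2 y hy)⟩

/-! ### From set-valued maps to quasi-metrics -/

lemma stronglyQuasiMetrizable_of_maps {X Y : Type*} [TopologicalSpace X] [T2Space X]
    [TopologicalSpace Y] {B : ℕ → Set Y} (hB : SICC B) {φ : Set X → X → Set Y}
    (hlsc : ∀ F : Set X, IsClosed F → LSCMap (φ F))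
    (hG : ∀ F : Set X, IsClosed F → F = ⋂ n, {x | (φ F x ∩ (B n)ᶜ).Nonempty})
    (hm : ∀ F₁ F₂ : Set X, IsClosed F₁ → IsClosed F₂ → F₁ ⊆ F₂ → ∀ x, φ F₁ x ⊆ φ F₂ x)
    (hb : ∀ K F : Set X, IsCompact K → IsClosed F → K ∩ F = ∅ →
      ∃ n : ℕ, F ⊆ {x | φ K x ⊆ B n}) : StronglyQuasiMetrizable X := by
  have hBmono : Monotone B := monotone_nat_of_le_succ fun n => (hB.2.2.2 n).subset
  let U : ℕ → Set X → Set X := fun n F => {x | (φ F x ∩ (B n)ᶜ).Nonempty}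
  have hUo : ∀ n F, IsClosed F → IsOpen (U n F) := fun n F hF =>
    (hlsc F hF).2 _ (hB.1 n).isOpen_compl
  have hUanti : ∀ m n, m ≤ n → ∀ F, U n F ⊆ U m F := fun m n hmn F x hx =>
    hx.mono (inter_subset_inter_right _ (compl_subset_compl.2 (hBmono hmn)))
  have hUm : ∀ n F₁ F₂, IsClosed F₁ → IsClosed F₂ → F₁ ⊆ F₂ → U n F₁ ⊆ U n F₂ :=
    fun n F₁ F₂ h1 h2 h x hx => hx.mono (inter_subset_inter_left _ (hm F₁ F₂ h1 h2 h x))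
  have hUsub : ∀ n F, IsClosed F → F ⊆ U n F := fun n F hF x hx => by
    rw [hG F hF] at hx
    exact mem_iInter.1 hx n
  refine (exists_chain_subset (g := fun n x => U n {x}) (fun n x => hUo n _ isClosed_singleton)
    (fun n x => hUsub n _ isClosed_singleton rfl) (fun m n hmn x => hUanti m n hmn _)
    ?_ ?_).stronglyQuasiMetrizable
  · intro x O hO hx
    have hx' : x ∉ ⋂ n, U n Oᶜ := by
      rw [← hG Oᶜ hO.isClosed_compl]
      exact fun h => h hx
    rw [mem_iInter] at hx'
    push Not at hx'
    obtain ⟨n, hn⟩ := hx'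
    refine ⟨n, fun y hy => ?_⟩
    by_contra hyO
    exact hn (hUm n {y} Oᶜ isClosed_singleton hO.isClosed_compl (singleton_subset_iff.2 hyO) hy)
  · intro x y a hy ha
    rw [tendsto_nhds]
    intro O hO hx
    obtain ⟨N, hN⟩ := eventually_atTop.1 (hy.eventually (hO.mem_nhds hx))
    let K : Set X := insert x (range fun n => y (n + N))
    have hK : IsCompact K := ((tendsto_add_atTop_iff_nat N).2 hy).isCompact_insert_range
    have hKO : K ∩ Oᶜ = ∅ := by
      rw [← Set.disjoint_iff_inter_eq_empty, Set.disjoint_compl_right_iff_subset]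
      rintro z (rfl | ⟨n, rfl⟩)
      · exact hx
      · exact hN _ (Nat.le_add_left _ _)
    obtain ⟨m, hm'⟩ := hb K Oᶜ hK hO.isClosed_compl hKO
    filter_upwards [eventually_ge_atTop (max N m)] with n hn
    have hyK : y n ∈ K :=
      Or.inr ⟨n - N, by simp [Nat.sub_add_cancel ((le_max_left N m).trans hn)]⟩
    have haK : a n ∈ U m K := hUanti m n ((le_max_right N m).trans hn) K
      (hUm n {y n} K isClosed_singleton hK.isClosed (singleton_subset_iff.2 hyK) (ha n))
    by_contra haO
    obtain ⟨v, hv1, hv2⟩ := haK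
    exact hv2 (hm' haO hv1)

/-! ### From quasi-metrics to set-valued maps -/

lemma exists_ball_subset {X : Type*} (e : X → X → ℝ)
    (htri : ∀ x y z, e x z ≤ e x y + e y z) {O : Set X}
    (hO : IsOpen[TopologicalSpace.generateFrom
      {s : Set X | ∃ (x : X) (r : ℝ), 0 < r ∧ s = {y | e x y < r}}] O) :
    ∀ x ∈ O, ∃ r > 0, ∀ y, e x y < r → y ∈ O := by
  induction hO with
  | basic s hs =>
    obtain ⟨c, r, hr, rfl⟩ := hs
    intro x hx
    have hx' : e c x < r := hx
    refine ⟨r - e c x, by linarith, fun y hy => ?_⟩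
    have := htri c x y
    change e c y < r
    linarith
  | univ => exact fun x _ => ⟨1, one_pos, fun _ _ => trivial⟩
  | inter s t _ _ hs ht =>
    intro x hx
    obtain ⟨r, hr, h1⟩ := hs x hx.1
    obtain ⟨r', hr', h2⟩ := ht x hx.2
    exact ⟨min r r', lt_min hr hr', fun y hy =>
      ⟨h1 y (hy.trans_le (min_le_left _ _)), h2 y (hy.trans_le (min_le_right _ _))⟩⟩
  | sUnion S _ ih =>
    rintro x ⟨s, hs, hx⟩
    obtain ⟨r, hr, h1⟩ := ih s hs x hx
    exact ⟨r, hr, fun y hy => ⟨s, hs, h1 y hy⟩⟩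

/-- A Lebesgue number lemma for quasi-metrics: if every point of a compact set `K` is the centre of
a `d`-ball inside `O`, then the radius can be chosen uniformly on `K`. -/
lemma exists_thickening_subset {X : Type*} [TopologicalSpace X] (d : X → X → ℝ)
    (hself : ∀ x, d x x = 0) (htri : ∀ x y z, d x z ≤ d x y + d y z)
    (hball : ∀ x r, 0 < r → IsOpen {y | d x y < r}) {K O : Set X} (hK : IsCompact K)
    (hKO : ∀ x ∈ K, ∃ r > 0, ∀ y, d x y < r → y ∈ O) :
    ∃ r > 0, ∀ z ∈ K, ∀ y, d z y < r → y ∈ O := by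
  refine hK.induction_on (p := fun K => ∃ r > 0, ∀ z ∈ K, ∀ y, d z y < r → y ∈ O)
    ⟨1, one_pos, fun z hz => absurd hz (notMem_empty z)⟩ ?_ ?_ ?_
  · rintro s t hst ⟨r, hr, h⟩
    exact ⟨r, hr, fun z hz => h z (hst hz)⟩
  · rintro s t ⟨r, hr, h⟩ ⟨r', hr', h'⟩
    refine ⟨min r r', lt_min hr hr', ?_⟩
    rintro z (hz | hz) y hy
    · exact h z hz y (hy.trans_le (min_le_left _ _))
    · exact h' z hz y (hy.trans_le (min_le_right _ _))
  · intro x hx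
    obtain ⟨r, hr, h⟩ := hKO x hx
    refine ⟨{y | d x y < r / 2}, mem_nhdsWithin_of_mem_nhds
      ((hball x _ (half_pos hr)).mem_nhds (by simpa [hself] using hr)), r / 2, half_pos hr, ?_⟩
    intro z hz y hy
    have hz' : d x z < r / 2 := hz
    have := htri x z y
    exact h y (by linarith)

/-- The set-valued map attached to `F` and a sequence of sets `U n F` decreasing to `F`. -/
def mapOf {X Y : Type*} (B : ℕ → Set Y) (U : ℕ → Set X → Set X) (F : Set X) (x : X) : Set Y :=
  {y | y ∈ B 0 ∨ ∃ n, x ∈ U n F ∧ y ∈ B (n + 1)}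

lemma mapOf_subset {X Y : Type*} {B : ℕ → Set Y} (hB : Monotone B) {U : ℕ → Set X → Set X}
    (hU : ∀ m n, m ≤ n → ∀ F, U n F ⊆ U m F) {F : Set X} {x : X} {m : ℕ} (hx : x ∉ U m F) :
    mapOf B U F x ⊆ B m := by
  rintro y (hy | ⟨n, hn, hy⟩)
  · exact hB (Nat.zero_le m) hy
  · have hnm : n < m := by
      by_contra hmn
      exact hx (hU m n (not_lt.1 hmn) F hn)
    exact hB hnm hy

lemma maps_of_stronglyQuasiMetrizable {X Y : Type*} [TopologicalSpace X]
    [TopologicalSpace Y] {B : ℕ → Set Y} (hB : SICC B) (h : StronglyQuasiMetrizable X) :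
    ∃ φ : Set X → X → Set Y,
        (∀ F : Set X, IsClosed F → LSCMap (φ F)) ∧
        (∀ F : Set X, IsClosed F → F = ⋂ n, {x | (φ F x ∩ (B n)ᶜ).Nonempty}) ∧
        (∀ F₁ F₂ : Set X, IsClosed F₁ → IsClosed F₂ → F₁ ⊆ F₂ →
          ∀ x, φ F₁ x ⊆ φ F₂ x) ∧
        (∀ (K F : Set X), IsCompact K → IsClosed F → K ∩ F = ∅ →
          ∃ n : ℕ, F ⊆ {x | φ K x ⊆ B n}) := by
  obtain ⟨d, -, hd0, htri, hstrong, htop⟩ := h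
  have hself : ∀ x, d x x = 0 := fun x => (hd0 x x).2 rfl
  have hBmono : Monotone B := monotone_nat_of_le_succ fun n => (hB.2.2.2 n).subset
  have hball : ∀ x r, 0 < r → IsOpen {y | d x y < r} := fun x r hr => by
    rw [htop]
    exact isOpen_generateFrom_of_mem ⟨x, r, hr, rfl⟩
  have hin : ∀ O : Set X, IsOpen O → ∀ x ∈ O, ∃ r > 0, ∀ y, d x y < r → y ∈ O := fun O hO =>
    exists_ball_subset d htri (by rw [← htop]; exact hO)
  have hin' : ∀ O : Set X, IsOpen O → ∀ x ∈ O, ∃ r > 0, ∀ y, d y x < r → y ∈ O := fun O hO =>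
    exists_ball_subset (fun x y => d y x) (fun x y z => by linarith [htri z y x])
      (hstrong O (by rw [← htop]; exact hO))
  let U : ℕ → Set X → Set X := fun n F => {y | ∃ z ∈ F, d z y < 1 / ((n : ℝ) + 1)}
  have hUo : ∀ n F, IsOpen (U n F) := by
    intro n F
    have : U n F = ⋃ z ∈ F, {y | d z y < 1 / ((n : ℝ) + 1)} := by
      ext y
      simp [U]
    rw [this]
    exact isOpen_biUnion fun z _ => hball z _ Nat.one_div_pos_of_nat
  have hUanti : ∀ m n, m ≤ n → ∀ F, U n F ⊆ U m F := by
    rintro m n hmn F y ⟨z, hz, hy⟩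
    exact ⟨z, hz, hy.trans_le (Nat.one_div_le_one_div hmn)⟩
  have hUsub : ∀ n F, F ⊆ U n F := fun n F x hx =>
    ⟨x, hx, by rw [hself]; exact Nat.one_div_pos_of_nat⟩
  have hUF : ∀ F, IsClosed F → ∀ x ∉ F, ∃ m, x ∉ U m F := by
    intro F hF x hx
    obtain ⟨r, hr, h⟩ := hin' Fᶜ hF.isOpen_compl x hx
    obtain ⟨m, hm⟩ := exists_nat_one_div_lt hr
    exact ⟨m, fun ⟨z, hz, hzx⟩ => h z (hzx.trans hm) hz⟩
  have huniv : ∀ F, ∀ x ∈ F, mapOf B U F x = univ := by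
    intro F x hx
    refine eq_univ_of_forall fun y => ?_
    obtain ⟨n, hn⟩ := mem_iUnion.1 (hB.2.1.symm ▸ mem_univ y : y ∈ ⋃ n, B n)
    exact Or.inr ⟨n, hUsub n F hx, hBmono (Nat.le_succ n) hn⟩
  refine ⟨mapOf B U, fun F hF => ⟨fun x => ⟨?_, ?_⟩, fun V hV => ?_⟩, fun F hF => ?_, ?_, ?_⟩
  · obtain ⟨y, hy⟩ := hB.2.2.1
    exact ⟨y, Or.inl hy⟩
  · by_cases hx : x ∈ F
    · rw [huniv F x hx]
      exact isClosed_univ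
    · obtain ⟨m, hm⟩ := hUF F hF x hx
      -- Only the indices below `m` contribute to the union, which is therefore finite.
      have : mapOf B U F x = B 0 ∪ ⋃ n ∈ {n | n < m ∧ x ∈ U n F}, B (n + 1) := by
        ext y
        simp only [mapOf, mem_ofPred_eq, mem_union, mem_iUnion, exists_prop]
        refine or_congr Iff.rfl (exists_congr fun n => ⟨fun ⟨h1, h2⟩ => ⟨⟨?_, h1⟩, h2⟩,
          fun ⟨h1, h2⟩ => ⟨h1.2, h2⟩⟩)
        by_contra hmn
        exact hm (hUanti m n (not_lt.1 hmn) F h1)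
      rw [this]
      exact (hB.1 0).union (((finite_lt_nat m).subset fun n hn => hn.1).isClosed_biUnion
        fun n _ => hB.1 (n + 1))
  · by_cases h0 : (B 0 ∩ V).Nonempty
    · obtain ⟨y, hy, hyV⟩ := h0
      have : {x | (mapOf B U F x ∩ V).Nonempty} = univ :=
        eq_univ_of_forall fun x => ⟨y, Or.inl hy, hyV⟩
      rw [this]
      exact isOpen_univ
    · have : {x | (mapOf B U F x ∩ V).Nonempty} =
          ⋃ n ∈ {n | (B (n + 1) ∩ V).Nonempty}, U n F := by
        ext x
        simp only [mem_ofPred_eq, mem_iUnion, exists_prop]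
        constructor
        · rintro ⟨y, hy | ⟨n, hn, hy⟩, hyV⟩
          · exact absurd ⟨y, hy, hyV⟩ h0
          · exact ⟨n, ⟨y, hy, hyV⟩, hn⟩
        · rintro ⟨n, ⟨y, hy, hyV⟩, hn⟩
          exact ⟨y, Or.inr ⟨n, hn, hy⟩, hyV⟩
      rw [this]
      exact isOpen_biUnion fun n _ => hUo n F
  · ext x
    simp only [mem_iInter, mem_ofPred_eq]
    constructor
    · intro hx n
      rw [huniv F x hx, univ_inter]
      obtain ⟨y, -, hy⟩ := exists_of_ssubset (hB.2.2.2 n)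
      exact ⟨y, hy⟩
    · intro hx
      by_contra hxF
      obtain ⟨m, hm⟩ := hUF F hF x hxF
      obtain ⟨y, hy, hy'⟩ := hx m
      exact hy' (mapOf_subset hBmono hUanti hm hy)
  · rintro F₁ F₂ - - hF x y (hy | ⟨n, ⟨z, hz, hzx⟩, hy⟩)
    · exact Or.inl hy
    · exact Or.inr ⟨n, ⟨z, hF hz, hzx⟩, hy⟩
  · intro K F hK hF hKF
    have hKF' : K ⊆ Fᶜ := by
      rwa [← Set.disjoint_compl_right_iff_subset, compl_compl, Set.disjoint_iff_inter_eq_empty]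
    obtain ⟨r, hr, h⟩ := exists_thickening_subset d hself htri hball hK
      fun x hx => hin Fᶜ hF.isOpen_compl x (hKF' hx)
    obtain ⟨n, hn⟩ := exists_nat_one_div_lt hr
    refine ⟨n, fun x hx => mapOf_subset hBmono hUanti ?_⟩
    rintro ⟨z, hz, hzx⟩
    exact h z hz x (hzx.trans hn) hx

end QM

theorem statement14 {X Y : Type*} [TopologicalSpace X] [T2Space X]
    [TopologicalSpace Y] [T2Space Y] (B : ℕ → Set Y) (hB : SICC B) :
    StronglyQuasiMetrizable X ↔
      ∃ φ : Set X → X → Set Y,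
        (∀ F : Set X, IsClosed F → LSCMap (φ F)) ∧
        (∀ F : Set X, IsClosed F → F = ⋂ n, {x | (φ F x ∩ (B n)ᶜ).Nonempty}) ∧
        (∀ F₁ F₂ : Set X, IsClosed F₁ → IsClosed F₂ → F₁ ⊆ F₂ →
          ∀ x, φ F₁ x ⊆ φ F₂ x) ∧
        (∀ (K F : Set X), IsCompact K → IsClosed F → K ∩ F = ∅ →
          ∃ n : ℕ, F ⊆ {x | φ K x ⊆ B n}) := by
  constructor
  · exact QM.maps_of_stronglyQuasiMetrizable hB
  · rintro ⟨φ, hlsc, hG, hm, hb⟩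
    exact QM.stronglyQuasiMetrizable_of_maps hB hlsc hG hm hb
end
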